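/- arXiv:0804.0027 — 4 statements merged into one kernel-verified Lean document; each statement's English description precedes it below -/
import Mathlib

section
/- Let G be a finite connected simple graph and let e, f be distinct edges of G, with fixed orientations. Then for every weighting y : E(G) → ℝ, T_e^f(G;y)·T_f^e(G;y) − T_{ef}(G;y)·T^{ef}(G;y) = (X⁺(G;e,f;y) − X⁻(G;e,f;y))². -/
/-!
Let `z` be `y` restricted to `E(G) ∖ {e, f}` and extended by zero to all pairs of vertices, and let
`L` be the Laplacian of the complete graph with weights `z`, grounded at a vertex `r`. The
matrix-tree theorem (`det_groundedLaplacian`) gives `det L = T^{ef}`. Raising the weight of a pair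
`uv` by one adds `b bᵀ` to `L`, where `b = δ_u - δ_v`; comparing the effect on the determinant with
the effect on the spanning tree polynomial gives `bᵀ adj(L) b = ∑ y^F` over the two-component
forests `F` separating `u` from `v`. In particular, with `b_e`, `b_f` the incidence vectors,
`T_e^f = b_eᵀ adj(L) b_e` and `T_f^e = b_fᵀ adj(L) b_f`.

Updating at both `e` and `f`, Jacobi's identity (`det_add_two_rank_one`) reads
`det L · T_{ef} = T_e^f T_f^e - (b_eᵀ adj(L) b_f)²`. It remains to see that
`b_eᵀ adj(L) b_f = ±(X⁺ - X⁻)`. By polarization, twice this bilinear value is a signed sum of the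
quadratic values at the four pairs consisting of one end of `e` and one end of `f`
(`treeSumThrough_polarization`), and a given forest contributes to that sum only when it separates
both edges, with a sign that records the relative orientation (`signed_separation_count`).

The matrix-tree theorem rests on a Cauchy–Binet expansion (`subset_expansion`) and on the
unimodularity of the incidence matrix of a tree (`det_gram_of_connected`).
-/

open Finset

variable {V : Type*}

/-- `T` is (the edge set of) a spanning tree of `G`: `T ⊆ E(G)` and the spanning
subgraph `(V, T)` is connected and acyclic. -/
def IsSpanningTree (G : SimpleGraph V) (T : Finset (Sym2 V)) : Prop :=
  (T : Set (Sym2 V)) ⊆ G.edgeSet ∧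
    (SimpleGraph.fromEdgeSet (T : Set (Sym2 V))).Connected ∧
    (SimpleGraph.fromEdgeSet (T : Set (Sym2 V))).IsAcyclic

/-- `y^S = ∏_{c ∈ S} y c`. -/
noncomputable def edgeWeight (y : Sym2 V → ℝ) (S : Finset (Sym2 V)) : ℝ :=
  ∏ c ∈ S, y c

open Classical in
/-- `T_e^f(G;y) = Σ_{T : e ∈ T, f ∉ T} y^{T∖{e}}` over spanning trees `T`. -/
noncomputable def Tin_eOut_f [Fintype V] [DecidableEq V] (G : SimpleGraph V)
    (e f : Sym2 V) (y : Sym2 V → ℝ) : ℝ :=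
  ∑ T ∈ univ.filter (fun T => IsSpanningTree G T ∧ e ∈ T ∧ f ∉ T),
    edgeWeight y (T.erase e)

open Classical in
/-- `T_{ef}(G;y) = Σ_{T : e ∈ T, f ∈ T} y^{T∖{e,f}}` over spanning trees `T`. -/
noncomputable def Tin_ef [Fintype V] [DecidableEq V] (G : SimpleGraph V)
    (e f : Sym2 V) (y : Sym2 V → ℝ) : ℝ :=
  ∑ T ∈ univ.filter (fun T => IsSpanningTree G T ∧ e ∈ T ∧ f ∈ T),
    edgeWeight y ((T.erase e).erase f)

open Classical in
/-- `T^{ef}(G;y) = Σ_{T : e ∉ T, f ∉ T} y^{T}` over spanning trees `T`. -/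
noncomputable def Tout_ef [Fintype V] [DecidableEq V] (G : SimpleGraph V)
    (e f : Sym2 V) (y : Sym2 V → ℝ) : ℝ :=
  ∑ T ∈ univ.filter (fun T => IsSpanningTree G T ∧ e ∉ T ∧ f ∉ T),
    edgeWeight y T

/-- `F ∈ X(G;e,f)`: `F ⊆ E(G) ∖ {e,f}` and both `F ∪ {e}` and `F ∪ {f}` are
spanning trees of `G`. -/
def MemX [DecidableEq V] (G : SimpleGraph V) (e f : Sym2 V)
    (F : Finset (Sym2 V)) : Prop :=
  e ∉ F ∧ f ∉ F ∧ IsSpanningTree G (insert e F) ∧ IsSpanningTree G (insert f F)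

open Classical in
/-- The generating polynomial of those `F ∈ X(G;e,f)` for which the vertices `p` and `q`
lie in the same component of `(V, F)`.  With `p = u₂` (head of `e`) and `q = w₁`
(tail of `f`) this is `X⁺(G;e,f;y)`; with `q = w₂` (head of `f`) it is `X⁻(G;e,f;y)`. -/
noncomputable def Xval [Fintype V] [DecidableEq V] (G : SimpleGraph V)
    (e f : Sym2 V) (p q : V) (y : Sym2 V → ℝ) : ℝ :=
  ∑ F ∈ univ.filter (fun F => MemX G e f F ∧
      (SimpleGraph.fromEdgeSet (F : Set (Sym2 V))).Reachable p q),
    edgeWeight y F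

/-! ### Determinants of rank-one updates -/

open Matrix in
/-- Continuous functions of a matrix that agree on nonsingular matrices agree everywhere: `M + x`
is nonsingular for all but finitely many `x`. -/
theorem eq_of_eq_on_nonsingular {n : Type*} [Fintype n] [DecidableEq n]
    {F H : Matrix n n ℝ → ℝ} (hF : Continuous F) (hH : Continuous H)
    (h : ∀ M : Matrix n n ℝ, M.det ≠ 0 → F M = H M) (M : Matrix n n ℝ) : F M = H M := by
  have hfin : ((-M).charpoly.rootSet ℝ).Finite := Polynomial.rootSet_finite _ _
  have hd := hfin.countable.dense_compl ℝ
  have hc : Continuous fun x : ℝ => scalar n x - (-M) := by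
    simp only [scalar_apply]
    fun_prop
  have key := Continuous.ext_on (f := fun x => F (scalar n x - (-M)))
    (g := fun x => H (scalar n x - (-M))) hd (hF.comp hc) (hH.comp hc) (by
      intro x hx
      apply h
      intro h0
      apply hx
      rw [Polynomial.mem_rootSet]
      refine ⟨(-M).charpoly_monic.ne_zero, ?_⟩
      rw [Polynomial.coe_aeval_eq_eval, eval_charpoly, h0])
  have := congrFun key 0
  simpa using this

open Matrix in
/-- Jacobi's identity for a two-dimensional minor, phrased with rank-one updates. With the
adjugate in place of the inverse it needs no invertibility hypothesis. -/
theorem det_add_two_rank_one {n : Type*} [Fintype n] [DecidableEq n]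
    (M : Matrix n n ℝ) (a b : n → ℝ) :
    M.det * (M + vecMulVec a a + vecMulVec b b).det
      = (M.det + a ⬝ᵥ M.adjugate *ᵥ a) * (M.det + b ⬝ᵥ M.adjugate *ᵥ b)
        - (a ⬝ᵥ M.adjugate *ᵥ b) * (b ⬝ᵥ M.adjugate *ᵥ a) := by
  revert M
  apply eq_of_eq_on_nonsingular (by fun_prop) (by fun_prop)
  intro M hM
  let U : Matrix n (Fin 2) ℝ := Matrix.of fun i => ![a i, b i]
  have hU : M + vecMulVec a a + vecMulVec b b = M + U * Uᵀ := by
    ext i j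
    simp [U, Matrix.mul_apply, vecMulVec_apply, Fin.sum_univ_two, add_assoc]
  have hentry : ∀ (N : Matrix n n ℝ) i j,
      (Uᵀ * N * U) i j = (fun k => U k i) ⬝ᵥ N *ᵥ (fun k => U k j) := by
    intro N i j
    rw [Matrix.mul_assoc]
    rfl
  rw [hU, Matrix.det_add_mul _ _ (isUnit_iff_ne_zero.mpr hM), Matrix.det_fin_two]
  have hadj : M.adjugate = M.det • M⁻¹ := by
    rw [Matrix.inv_def, smul_smul, Ring.mul_inverse_cancel _ (isUnit_iff_ne_zero.mpr hM), one_smul]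
  simp only [Matrix.add_apply, hentry, hadj, smul_mulVec, dotProduct_smul, smul_eq_mul]
  simp [U]
  ring

open Matrix in
theorem det_add_rank_one {n : Type*} [Fintype n] [DecidableEq n]
    (M : Matrix n n ℝ) (a : n → ℝ) :
    (M + vecMulVec a a).det = M.det + a ⬝ᵥ M.adjugate *ᵥ a := by
  revert M
  apply eq_of_eq_on_nonsingular (by fun_prop) (by fun_prop)
  intro M hM
  have := det_add_two_rank_one M a 0
  simp at this
  apply mul_left_cancel₀ hM
  linarith

/-! ### Expansion of the determinant of a weighted Gram matrix -/

/-- Expanding the determinant row by row, only injective choices of a vector for each row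
contribute, and they can be grouped by their image. -/
theorem exists_subset_expansion {n ι : Type*} [Fintype n] [DecidableEq n] [Fintype ι]
    [DecidableEq ι] (b : ι → n → ℝ) :
    ∃ E : Finset ι → ℝ, (∀ T, T.card ≠ Fintype.card n → E T = 0) ∧
      ∀ z : ι → ℝ, (∑ c, z c • Matrix.vecMulVec (b c) (b c)).det = ∑ T, E T * ∏ c ∈ T, z c := by
  let a : (n → ι) → ℝ := fun g => (∏ i, b (g i) i) * (Matrix.of fun i => b (g i)).det
  have ha : ∀ g : n → ι, ¬ Function.Injective g → a g = 0 := by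
    intro g hg
    simp only [Function.Injective, not_forall] at hg
    obtain ⟨i, j, hij, hne⟩ := hg
    simp only [a]
    rw [Matrix.det_zero_of_row_eq hne (by ext k; simp [hij]), mul_zero]
  refine ⟨fun T => ∑ g ∈ univ.filter (fun g : n → ι => univ.image g = T), a g, ?_, ?_⟩
  · intro T hT
    apply Finset.sum_eq_zero
    intro g hg
    apply ha
    intro hinj
    apply hT
    rw [← (Finset.mem_filter.mp hg).2, Finset.card_image_of_injective _ hinj, Finset.card_univ]
  · intro z
    have h1 : (∑ c, z c • Matrix.vecMulVec (b c) (b c))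
        = fun i => ∑ c, (z c * b c i) • b c := by
      ext i j
      simp [Matrix.sum_apply, Matrix.vecMulVec_apply, mul_assoc]
    have h2 : (∑ c, z c • Matrix.vecMulVec (b c) (b c)).det
        = ∑ g : n → ι, a g * ∏ i, z (g i) := by
      rw [h1]
      change (Matrix.detRowAlternating (R := ℝ) (n := n)).toMultilinearMap _ = _
      rw [MultilinearMap.map_sum]
      refine Finset.sum_congr rfl fun g _ => ?_
      rw [MultilinearMap.map_smul_univ]
      simp only [a, Finset.prod_mul_distrib, smul_eq_mul]
      change _ * Matrix.det _ = _
      rw [mul_assoc, mul_comm]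
      rfl
    rw [h2, ← Finset.sum_fiberwise_of_maps_to
      (g := fun g : n → ι => univ.image g) (t := univ) (fun _ _ => mem_univ _)]
    refine Finset.sum_congr rfl fun T _ => ?_
    rw [Finset.sum_mul]
    refine Finset.sum_congr rfl fun g hg => ?_
    by_cases hinj : Function.Injective g
    · rw [← (Finset.mem_filter.mp hg).2, Finset.prod_image (fun _ _ _ _ h => hinj h)]
    · simp [ha g hinj]

/-- A form of the Cauchy–Binet formula. The coefficient of `∏ c ∈ T, z c` is found by taking `z` to
be the indicator of `T`, so no ordering of `T` is needed. -/
theorem subset_expansion {n ι : Type*} [Fintype n] [DecidableEq n] [Fintype ι]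
    [DecidableEq ι] (b : ι → n → ℝ) (z : ι → ℝ) :
    (∑ c, z c • Matrix.vecMulVec (b c) (b c)).det
      = ∑ T ∈ univ.filter (fun T : Finset ι => T.card = Fintype.card n),
          (∑ c ∈ T, Matrix.vecMulVec (b c) (b c)).det * ∏ c ∈ T, z c := by
  obtain ⟨E, hE, h⟩ := exists_subset_expansion b
  have key : ∀ T : Finset ι, T.card = Fintype.card n →
      (∑ c ∈ T, Matrix.vecMulVec (b c) (b c)).det = E T := by
    intro T hT
    have h1 := h (fun c => if c ∈ T then 1 else 0)
    simp only [ite_smul, one_smul, zero_smul, Finset.sum_ite_mem, Finset.univ_inter] at h1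
    rw [h1, Finset.sum_eq_single T]
    · rw [Finset.prod_eq_one fun c hc => by simp [hc], mul_one]
    · intro S _ hST
      by_cases hS : S.card = Fintype.card n
      · obtain ⟨c, hcS, hcT⟩ : ∃ c ∈ S, c ∉ T := by
          by_contra hcon
          push Not at hcon
          exact hST (Finset.eq_of_subset_of_card_le hcon (by rw [hS, hT]))
        rw [Finset.prod_eq_zero hcS (by simp [hcT]), mul_zero]
      · rw [hE S hS, zero_mul]
    · simp
  rw [h, Finset.sum_filter]
  refine Finset.sum_congr rfl fun T _ => ?_
  split_ifs with hT
  · rw [key T hT]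
  · rw [hE T hT, zero_mul]

/-! ### The matrix-tree theorem -/

/-- The coordinate vector of the vertex `u` after grounding the vertex `r`: the coordinates are
indexed by the vertices other than `r`, and the vector of `r` itself is zero. -/
def groundedVertex {V : Type*} [DecidableEq V] (R : Type*) [Ring R] (r u : V) :
    {v : V // v ≠ r} → R :=
  fun x => if x.1 = u then 1 else 0

/-- The incidence vector of `c` with `r` grounded. The orientation of `c` is an arbitrary choice;
it does not affect `b bᵀ`. Diagonal elements of `Sym2 V` get the zero vector. -/
noncomputable def groundedEdge {V : Type*} [DecidableEq V] (R : Type*) [Ring R] (r : V)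
    (c : Sym2 V) : {v : V // v ≠ r} → R :=
  groundedVertex R r (Quot.out c).1 - groundedVertex R r (Quot.out c).2

theorem groundedEdge_mk {V : Type*} [DecidableEq V] (R : Type*) [Ring R] (r u v : V) :
    groundedEdge R r s(u, v) = groundedVertex R r u - groundedVertex R r v ∨
      groundedEdge R r s(u, v) = -(groundedVertex R r u - groundedVertex R r v) := by
  have h : s((Quot.out s(u, v)).1, (Quot.out s(u, v)).2) = s(u, v) := Quot.out_eq _
  rw [Sym2.eq_iff] at h
  rcases h with ⟨h1, h2⟩ | ⟨h1, h2⟩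
  · left; simp only [groundedEdge, h1, h2]
  · right; simp only [groundedEdge, h1, h2]; abel

theorem vecMulVec_groundedEdge {V : Type*} [DecidableEq V] (r u v : V) :
    Matrix.vecMulVec (groundedEdge ℝ r s(u, v)) (groundedEdge ℝ r s(u, v))
      = Matrix.vecMulVec (groundedVertex ℝ r u - groundedVertex ℝ r v)
          (groundedVertex ℝ r u - groundedVertex ℝ r v) := by
  rcases groundedEdge_mk ℝ r u v with h | h <;> rw [h]
  rw [Matrix.neg_vecMulVec, Matrix.vecMulVec_neg, neg_neg]

theorem isSpanningTree_iff_top (G : SimpleGraph V) (T : Finset (Sym2 V)) :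
    IsSpanningTree G T ↔ (T : Set (Sym2 V)) ⊆ G.edgeSet ∧ IsSpanningTree ⊤ T := by
  constructor
  · rintro ⟨h1, h2⟩
    exact ⟨h1, h1.trans (SimpleGraph.edgeSet_mono le_top), h2⟩
  · rintro ⟨h1, -, h2⟩
    exact ⟨h1, h2⟩

theorem not_isDiag_of_subset {T : Finset (Sym2 V)} {G : SimpleGraph V}
    (h : (T : Set (Sym2 V)) ⊆ G.edgeSet) : (T : Set (Sym2 V)) \ Sym2.diagSet = T := by
  ext c
  simp only [Set.mem_sdiff, mem_coe, and_iff_left_iff_imp]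
  intro hc hd
  exact G.not_isDiag_of_mem_edgeSet (h hc) (by simpa using hd)

theorem card_edgeSet_fromEdgeSet_le (T : Finset (Sym2 V)) :
    Nat.card (SimpleGraph.fromEdgeSet (T : Set (Sym2 V))).edgeSet ≤ T.card := by
  rw [SimpleGraph.edgeSet_fromEdgeSet, Nat.card_coe_set_eq, ← Set.ncard_coe_finset]
  exact Set.ncard_le_ncard Set.sdiff_subset T.finite_toSet

/-- In the complete graph a spanning tree is a connected set of `|V| - 1` pairs; the count itself
rules out diagonal pairs. -/
theorem isSpanningTree_top_iff [Fintype V] (T : Finset (Sym2 V)) :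
    IsSpanningTree ⊤ T ↔ (SimpleGraph.fromEdgeSet (T : Set (Sym2 V))).Connected ∧
      T.card + 1 = Fintype.card V := by
  constructor
  · rintro ⟨h1, h2, h3⟩
    refine ⟨h2, ?_⟩
    have := (SimpleGraph.isTree_iff_connected_and_card.mp ⟨h2, h3⟩).2
    rwa [SimpleGraph.edgeSet_fromEdgeSet, not_isDiag_of_subset h1, Nat.card_coe_set_eq,
      Set.ncard_coe_finset, Nat.card_eq_fintype_card] at this
  · rintro ⟨h1, h2⟩
    have h3 := h1.card_vert_le_card_edgeSet_add_one
    have h4 := card_edgeSet_fromEdgeSet_le T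
    rw [Nat.card_eq_fintype_card] at h3
    have h5 := SimpleGraph.isTree_iff_connected_and_card.mpr
      ⟨h1, by rw [Nat.card_eq_fintype_card (α := V)]; omega⟩
    refine ⟨?_, h1, h5.isAcyclic⟩
    have h6 : (T : Set (Sym2 V)) \ Sym2.diagSet = T := by
      apply Set.eq_of_subset_of_ncard_le Set.sdiff_subset _ T.finite_toSet
      rw [Set.ncard_coe_finset, ← SimpleGraph.edgeSet_fromEdgeSet, ← Nat.card_coe_set_eq]
      omega
    rw [← h6, ← SimpleGraph.edgeSet_fromEdgeSet]
    exact SimpleGraph.edgeSet_mono le_top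

open Matrix in
/-- The indicator of the vertices not connected to `r` lies in the kernel. -/
theorem det_gram_of_not_connected [Fintype V] [DecidableEq V] (r : V) (T : Finset (Sym2 V))
    (hT : ¬ (SimpleGraph.fromEdgeSet (T : Set (Sym2 V))).Connected) :
    (∑ c ∈ T, vecMulVec (groundedEdge ℝ r c) (groundedEdge ℝ r c)).det = 0 := by
  classical
  set H := SimpleGraph.fromEdgeSet (T : Set (Sym2 V)) with hH
  obtain ⟨v, hv⟩ : ∃ v, ¬ H.Reachable r v := by
    by_contra hcon
    push Not at hcon
    exact hT ((SimpleGraph.connected_iff_exists_forall_reachable _).mpr ⟨r, hcon⟩)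
  let φ : V → ℝ := fun x => if H.Reachable r x then 0 else 1
  have hvr : v ≠ r := by
    rintro rfl
    exact hv (SimpleGraph.Reachable.refl _)
  have hφ : ∀ u, groundedVertex ℝ r u ⬝ᵥ (fun x => φ x.1) = φ u := by
    intro u
    by_cases hu : u = r
    · subst hu
      simp only [groundedVertex, dotProduct, φ, SimpleGraph.Reachable.refl, if_true]
      apply Finset.sum_eq_zero
      intro x _
      rw [if_neg x.2, zero_mul]
    · simp only [groundedVertex, dotProduct]
      rw [Finset.sum_eq_single ⟨u, hu⟩]
      · simp
      · intro x _ hx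
        rw [if_neg (fun h => hx (Subtype.ext h)), zero_mul]
      · simp
  rw [← exists_mulVec_eq_zero_iff]
  refine ⟨fun x => φ x.1, ?_, ?_⟩
  · intro h0
    have := congrFun h0 ⟨v, hvr⟩
    simp [φ, hv] at this
  · rw [sum_mulVec]
    apply Finset.sum_eq_zero
    intro c hc
    have hout : s((Quot.out c).1, (Quot.out c).2) = c := Quot.out_eq _
    have hb : groundedEdge ℝ r c ⬝ᵥ (fun x => φ x.1) = 0 := by
      rw [groundedEdge, sub_dotProduct, hφ, hφ, sub_eq_zero]
      by_cases heq : (Quot.out c).1 = (Quot.out c).2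
      · rw [heq]
      · have hadj : H.Adj (Quot.out c).1 (Quot.out c).2 := by
          rw [hH, SimpleGraph.fromEdgeSet_adj]
          exact ⟨by rw [hout]; exact hc, heq⟩
        have : H.Reachable r (Quot.out c).1 ↔ H.Reachable r (Quot.out c).2 :=
          ⟨fun h => h.trans hadj.reachable, fun h => h.trans hadj.reachable.symm⟩
        simp only [φ, this]
    rw [vecMulVec_mulVec, hb]
    simp

open Matrix in
/-- The incidence vectors of a connected edge set span the integer lattice (telescope along a walk
to the grounded vertex), so a square incidence matrix is unimodular. -/
theorem det_gram_of_connected [Fintype V] [DecidableEq V] (r : V) (T : Finset (Sym2 V))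
    (hT : (SimpleGraph.fromEdgeSet (T : Set (Sym2 V))).Connected)
    (hcard : T.card = Fintype.card {v : V // v ≠ r}) :
    (∑ c ∈ T, vecMulVec (groundedEdge ℝ r c) (groundedEdge ℝ r c)).det = 1 := by
  let B : Matrix {v : V // v ≠ r} T ℤ := Matrix.of fun x c => groundedEdge ℤ r c.1 x
  have hstep : ∀ u v, (SimpleGraph.fromEdgeSet (T : Set (Sym2 V))).Adj u v →
      ∃ w, B *ᵥ w = groundedVertex ℤ r u - groundedVertex ℤ r v := by
    intro u v huv
    rw [SimpleGraph.fromEdgeSet_adj] at huv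
    have hcol : B.col ⟨s(u, v), huv.1⟩ = groundedEdge ℤ r s(u, v) := rfl
    rcases groundedEdge_mk ℤ r u v with h | h
    · exact ⟨Pi.single ⟨s(u, v), huv.1⟩ 1, by rw [mulVec_single_one, hcol, h]⟩
    · exact ⟨-Pi.single ⟨s(u, v), huv.1⟩ 1, by rw [mulVec_neg, mulVec_single_one, hcol, h, neg_neg]⟩
  have hwalk : ∀ u v, (SimpleGraph.fromEdgeSet (T : Set (Sym2 V))).Walk u v →
      ∃ w, B *ᵥ w = groundedVertex ℤ r u - groundedVertex ℤ r v := by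
    intro u v p
    induction p with
    | nil => exact ⟨0, by simp⟩
    | cons h _ ih =>
      obtain ⟨w1, h1⟩ := ih
      obtain ⟨w2, h2⟩ := hstep _ _ h
      exact ⟨w2 + w1, by rw [mulVec_add, h1, h2]; abel⟩
  have hr : groundedVertex ℤ r r = 0 := by
    ext x
    simp [groundedVertex, x.2]
  have hex : ∀ x : {v : V // v ≠ r}, ∃ w, B *ᵥ w = groundedVertex ℤ r x.1 := by
    intro x
    obtain ⟨p⟩ := hT.preconnected x.1 r
    obtain ⟨w, hw⟩ := hwalk _ _ p
    exact ⟨w, by rw [hw, hr, sub_zero]⟩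
  choose w hw using hex
  let C : Matrix T {v : V // v ≠ r} ℤ := Matrix.of fun c x => w x c
  have hBC : B * C = 1 := by
    ext x x'
    have := congrFun (hw x') x
    simp only [groundedVertex] at this
    rw [Matrix.one_apply]
    simp only [Subtype.ext_iff]
    exact this
  have heq : Fintype.card T = Fintype.card {v : V // v ≠ r} := by rw [Fintype.card_coe, hcard]
  let σ := Fintype.equivOfCardEq heq
  have hdet : (B.submatrix id σ.symm).det * (C.submatrix σ.symm id).det = 1 := by
    rw [← det_mul, submatrix_mul_equiv, hBC]
    simp
  have hsq : (B.submatrix id σ.symm).det * (B.submatrix id σ.symm).det = 1 := by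
    rcases Int.isUnit_iff.mp (IsUnit.of_mul_eq_one _ hdet) with h | h <;> rw [h] <;> norm_num
  have hgram : (B * Bᵀ).det = 1 := by
    calc (B * Bᵀ).det = (B.submatrix id σ.symm * (B.submatrix id σ.symm)ᵀ).det := by
          rw [transpose_submatrix, submatrix_mul_equiv, submatrix_id_id]
      _ = 1 := by rw [det_mul, det_transpose, hsq]
  have hmap : ∑ c ∈ T, vecMulVec (groundedEdge ℝ r c) (groundedEdge ℝ r c)
      = (B * Bᵀ).map (Int.castRingHom ℝ) := by
    ext x x'
    have hcast : ∀ c x, groundedEdge ℝ r c x = ((groundedEdge ℤ r c x : ℤ) : ℝ) := by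
      intro c x
      simp [groundedEdge, groundedVertex]
    simp only [Matrix.sum_apply, vecMulVec_apply, map_apply, Matrix.mul_apply, transpose_apply, B,
      Matrix.of_apply, hcast]
    rw [← Finset.sum_coe_sort T]
    simp
  rw [hmap, ← RingHom.mapMatrix_apply, ← RingHom.map_det, hgram]
  simp

/-- The Laplacian of the complete graph with edge weights `z`, grounded at `r`. -/
noncomputable def groundedLaplacian [Fintype V] [DecidableEq V] (r : V) (z : Sym2 V → ℝ) :
    Matrix {v : V // v ≠ r} {v : V // v ≠ r} ℝ :=
  ∑ c, z c • Matrix.vecMulVec (groundedEdge ℝ r c) (groundedEdge ℝ r c)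

open Classical in
/-- Kirchhoff's matrix-tree theorem for the weighted complete graph. -/
theorem det_groundedLaplacian [Fintype V] [DecidableEq V] (r : V) (z : Sym2 V → ℝ) :
    (groundedLaplacian r z).det
      = ∑ T : Finset (Sym2 V), if IsSpanningTree ⊤ T then ∏ c ∈ T, z c else 0 := by
  have hcard : Fintype.card {v : V // v ≠ r} + 1 = Fintype.card V := by
    have : 0 < Fintype.card V := Fintype.card_pos_iff.mpr ⟨r⟩
    rw [Fintype.card_subtype_compl, Fintype.card_subtype_eq]
    omega
  rw [groundedLaplacian, subset_expansion, Finset.sum_filter]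
  refine Finset.sum_congr rfl fun T _ => ?_
  rw [isSpanningTree_top_iff]
  by_cases h1 : T.card = Fintype.card {v : V // v ≠ r}
  · by_cases h2 : (SimpleGraph.fromEdgeSet (T : Set (Sym2 V))).Connected
    · rw [if_pos h1, if_pos ⟨h2, by omega⟩, det_gram_of_connected r T h2 h1, one_mul]
    · rw [if_pos h1, if_neg (fun h => h2 h.1), det_gram_of_not_connected r T h2, zero_mul]
  · rw [if_neg h1, if_neg (fun h => h1 (by omega))]

/-! ### Derivatives of the spanning tree polynomial -/

theorem prod_add_single {ι : Type*} [DecidableEq ι] (z : ι → ℝ) (c : ι) (T : Finset ι) :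
    ∏ i ∈ T, (z + Pi.single c 1 : ι → ℝ) i
      = ∏ i ∈ T, z i + if c ∈ T then ∏ i ∈ T.erase c, z i else 0 := by
  have hoff : ∀ S : Finset ι, c ∉ S → ∏ i ∈ S, (z + Pi.single c 1 : ι → ℝ) i = ∏ i ∈ S, z i := by
    intro S hS
    refine Finset.prod_congr rfl fun i hi => ?_
    have : i ≠ c := fun h => hS (h ▸ hi)
    simp [this]
  split_ifs with h
  · rw [← Finset.mul_prod_erase T _ h, ← Finset.mul_prod_erase T z h, hoff _ (by simp)]
    simp
    ring
  · rw [hoff T h, add_zero]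

open Classical in
/-- The derivative of the spanning tree polynomial of the complete graph with respect to the
weight of `c`. -/
noncomputable def treeSumThrough [Fintype V] [DecidableEq V] (c : Sym2 V) (z : Sym2 V → ℝ) : ℝ :=
  ∑ T : Finset (Sym2 V), if IsSpanningTree ⊤ T ∧ c ∈ T then ∏ i ∈ T.erase c, z i else 0

theorem groundedLaplacian_add_single [Fintype V] [DecidableEq V] (r u v : V)
    (z : Sym2 V → ℝ) :
    groundedLaplacian r (z + Pi.single s(u, v) 1)
      = groundedLaplacian r z
        + Matrix.vecMulVec (groundedVertex ℝ r u - groundedVertex ℝ r v)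
          (groundedVertex ℝ r u - groundedVertex ℝ r v) := by
  rw [← vecMulVec_groundedEdge]
  simp only [groundedLaplacian, Pi.add_apply, add_smul, Finset.sum_add_distrib]
  congr 1
  rw [Finset.sum_eq_single s(u, v)]
  · simp
  · intro c _ hc
    simp [hc]
  · simp

theorem det_groundedLaplacian_add_single [Fintype V] [DecidableEq V] (r : V) (c : Sym2 V)
    (z : Sym2 V → ℝ) :
    (groundedLaplacian r (z + Pi.single c 1)).det
      = (groundedLaplacian r z).det + treeSumThrough c z := by
  classical
  rw [det_groundedLaplacian, det_groundedLaplacian, treeSumThrough, ← Finset.sum_add_distrib]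
  refine Finset.sum_congr rfl fun T _ => ?_
  rw [prod_add_single]
  by_cases h : IsSpanningTree ⊤ T <;> simp [h]

open Classical in
theorem treeSumThrough_add_single [Fintype V] [DecidableEq V] {c d : Sym2 V} (hcd : c ≠ d)
    (z : Sym2 V → ℝ) :
    treeSumThrough c (z + Pi.single d 1) = treeSumThrough c z
      + ∑ T : Finset (Sym2 V), if IsSpanningTree ⊤ T ∧ c ∈ T ∧ d ∈ T
          then ∏ i ∈ (T.erase c).erase d, z i else 0 := by
  rw [treeSumThrough, treeSumThrough, ← Finset.sum_add_distrib]
  refine Finset.sum_congr rfl fun T _ => ?_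
  rw [prod_add_single]
  by_cases h : IsSpanningTree ⊤ T <;> by_cases h2 : c ∈ T <;> simp [h, h2, hcd.symm]

open Matrix in
/-- The effective-resistance form `(δ_u - δ_v)ᵀ adj(L) (δ_u - δ_v)` enumerates the spanning trees
through `s(u, v)`. -/
theorem dotProduct_adjugate_eq_treeSumThrough [Fintype V] [DecidableEq V] (r u v : V)
    (z : Sym2 V → ℝ) :
    (groundedVertex ℝ r u - groundedVertex ℝ r v) ⬝ᵥ (groundedLaplacian r z).adjugate *ᵥ
      (groundedVertex ℝ r u - groundedVertex ℝ r v) = treeSumThrough s(u, v) z := by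
  have h1 := det_groundedLaplacian_add_single r s(u, v) z
  rw [groundedLaplacian_add_single, det_add_rank_one] at h1
  linarith

/-! ### Two-component forests -/

/-- `F` has `|V| - 2` elements and among any three vertices some two are connected in `(V, F)`.
The first condition forces at least two components and the second at most two, so `(V, F)` is a
spanning forest of the complete graph with exactly two components. -/
def IsTwoForest [Fintype V] (F : Finset (Sym2 V)) : Prop :=
  F.card + 2 = Fintype.card V ∧ ∀ a b c : V,
    (SimpleGraph.fromEdgeSet (F : Set (Sym2 V))).Reachable a b ∨
    (SimpleGraph.fromEdgeSet (F : Set (Sym2 V))).Reachable a c ∨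
    (SimpleGraph.fromEdgeSet (F : Set (Sym2 V))).Reachable b c

theorem isSpanningTree_insert_iff [Fintype V] [DecidableEq V] (F : Finset (Sym2 V)) (u v : V) :
    (s(u, v) ∉ F ∧ IsSpanningTree ⊤ (insert s(u, v) F)) ↔
      IsTwoForest F ∧ ¬ (SimpleGraph.fromEdgeSet (F : Set (Sym2 V))).Reachable u v := by
  set H := SimpleGraph.fromEdgeSet (F : Set (Sym2 V)) with hH
  set H' := SimpleGraph.fromEdgeSet ((insert s(u, v) F : Finset (Sym2 V)) : Set (Sym2 V)) with hH'
  have hle : H ≤ H' := SimpleGraph.fromEdgeSet_mono (by simp)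
  have hadj : ∀ a b, H'.Adj a b → H.Adj a b ∨ s(a, b) = s(u, v) := by
    intro a b hab
    rw [hH', SimpleGraph.fromEdgeSet_adj] at hab
    simp only [coe_insert, Set.mem_insert_iff, mem_coe] at hab
    rcases hab with ⟨h | h, hne⟩
    · exact Or.inr h
    · exact Or.inl (by rw [hH, SimpleGraph.fromEdgeSet_adj]; exact ⟨h, hne⟩)
  rw [isSpanningTree_top_iff, ← hH']
  constructor
  · rintro ⟨hnot, hconn, hcard⟩
    rw [Finset.card_insert_of_notMem hnot] at hcard
    have hwalk : ∀ a b, H'.Walk a b → H.Reachable b u ∨ H.Reachable b v →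
        H.Reachable a u ∨ H.Reachable a v := by
      intro a b p
      induction p with
      | nil => exact id
      | @cons a b c h _ ih =>
        intro hc
        rcases hadj _ _ h with h1 | h1
        · exact (ih hc).imp h1.reachable.trans h1.reachable.trans
        · rcases Sym2.eq_iff.mp h1 with ⟨rfl, rfl⟩ | ⟨rfl, rfl⟩
          · exact Or.inl (SimpleGraph.Reachable.refl _)
          · exact Or.inr (SimpleGraph.Reachable.refl _)
    have hall : ∀ a, H.Reachable a u ∨ H.Reachable a v := by
      intro a
      obtain ⟨p⟩ := hconn.preconnected a u
      exact hwalk _ _ p (Or.inl (SimpleGraph.Reachable.refl _))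
    refine ⟨⟨by omega, fun a b c => ?_⟩, fun huv => ?_⟩
    · rcases hall a with ha | ha <;> rcases hall b with hb | hb
      · exact Or.inl (ha.trans hb.symm)
      · rcases hall c with hc | hc
        · exact Or.inr (Or.inl (ha.trans hc.symm))
        · exact Or.inr (Or.inr (hb.trans hc.symm))
      · rcases hall c with hc | hc
        · exact Or.inr (Or.inr (hb.trans hc.symm))
        · exact Or.inr (Or.inl (ha.trans hc.symm))
      · exact Or.inl (ha.trans hb.symm)
    · have hHconn : H.Connected := by
        refine (SimpleGraph.connected_iff_exists_forall_reachable _).mpr ⟨u, fun w => ?_⟩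
        rcases hall w with h | h
        · exact h.symm
        · exact huv.trans h.symm
      -- A connected graph on `V` cannot have only `|V| - 2` edges.
      have h3 := hHconn.card_vert_le_card_edgeSet_add_one
      have h4 : Nat.card H.edgeSet ≤ F.card := card_edgeSet_fromEdgeSet_le F
      rw [Nat.card_eq_fintype_card] at h3
      omega
  · rintro ⟨⟨hcard, hthree⟩, huv⟩
    have hne : u ≠ v := by
      rintro rfl
      exact huv (SimpleGraph.Reachable.refl _)
    have hnot : s(u, v) ∉ F := by
      intro hmem
      apply huv
      apply SimpleGraph.Adj.reachable
      rw [hH, SimpleGraph.fromEdgeSet_adj]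
      exact ⟨hmem, hne⟩
    refine ⟨hnot, ?_, by rw [Finset.card_insert_of_notMem hnot]; omega⟩
    refine (SimpleGraph.connected_iff_exists_forall_reachable _).mpr ⟨u, fun w => ?_⟩
    rcases hthree u v w with h | h | h
    · exact absurd h huv
    · exact h.mono hle
    · refine SimpleGraph.Reachable.trans (SimpleGraph.Adj.reachable ?_) (h.mono hle)
      rw [hH', SimpleGraph.fromEdgeSet_adj]
      exact ⟨by simp, hne⟩

open Classical in
/-- Deleting `s(u, v)` from the spanning trees through it gives the two-component forests
separating `u` from `v`. For `u = v` both sides are zero. -/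
theorem treeSumThrough_eq_sum_forest [Fintype V] [DecidableEq V] (u v : V) (z : Sym2 V → ℝ) :
    treeSumThrough s(u, v) z
      = ∑ F : Finset (Sym2 V), if IsTwoForest F ∧
          ¬ (SimpleGraph.fromEdgeSet (F : Set (Sym2 V))).Reachable u v
        then ∏ i ∈ F, z i else 0 := by
  simp only [← isSpanningTree_insert_iff]
  rw [treeSumThrough, ← Finset.sum_filter, ← Finset.sum_filter]
  refine Finset.sum_nbij' (fun T => T.erase s(u, v)) (fun F => insert s(u, v) F) ?_ ?_ ?_ ?_ ?_
  · intro T hT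
    obtain ⟨-, h1, h2⟩ := Finset.mem_filter.mp hT
    rw [Finset.mem_filter, Finset.insert_erase h2]
    exact ⟨mem_univ _, by simp, h1⟩
  · intro F hF
    obtain ⟨-, h1, h2⟩ := Finset.mem_filter.mp hF
    exact Finset.mem_filter.mpr ⟨mem_univ _, h2, Finset.mem_insert_self _ _⟩
  · intro T hT
    exact Finset.insert_erase (Finset.mem_filter.mp hT).2.2
  · intro F hF
    exact Finset.erase_insert (Finset.mem_filter.mp hF).2.1
  · intro T _
    rfl

/-! ### The sums of the theorem in terms of the complete graph -/

open Classical in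
/-- The weighting `y` restricted to `E(G) ∖ {e, f}`, extended by zero to all pairs of vertices. -/
noncomputable def offWeight (G : SimpleGraph V) (e f : Sym2 V) (y : Sym2 V → ℝ) : Sym2 V → ℝ :=
  fun c => if c ∈ G.edgeSet ∧ c ≠ e ∧ c ≠ f then y c else 0

open Classical in
theorem prod_offWeight (G : SimpleGraph V) (e f : Sym2 V) (y : Sym2 V → ℝ)
    (T : Finset (Sym2 V)) :
    ∏ c ∈ T, offWeight G e f y c
      = if ∀ c ∈ T, c ∈ G.edgeSet ∧ c ≠ e ∧ c ≠ f then edgeWeight y T else 0 := by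
  split_ifs with h
  · exact Finset.prod_congr rfl fun c hc => by rw [offWeight, if_pos (h c hc)]
  · push Not at h
    obtain ⟨c, hc, h⟩ := h
    exact Finset.prod_eq_zero hc (by
      rw [offWeight, if_neg]
      rintro ⟨h1, h2, h3⟩
      exact h3 (h h1 h2))

theorem offWeight_comm (G : SimpleGraph V) (e f : Sym2 V) (y : Sym2 V → ℝ) :
    offWeight G e f y = offWeight G f e y := by
  ext c
  unfold offWeight
  congr 1
  rw [eq_iff_iff]
  tauto

theorem Tout_ef_eq_det [Fintype V] [DecidableEq V] (G : SimpleGraph V) (r : V) (e f : Sym2 V)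
    (y : Sym2 V → ℝ) :
    Tout_ef G e f y = (groundedLaplacian r (offWeight G e f y)).det := by
  classical
  rw [Tout_ef, det_groundedLaplacian, Finset.sum_filter]
  refine Finset.sum_congr rfl fun T _ => ?_
  rw [prod_offWeight, ← ite_and]
  congr 1
  rw [isSpanningTree_iff_top, eq_iff_iff]
  constructor
  · rintro ⟨⟨h1, h2⟩, h3, h4⟩
    exact ⟨h2, fun c hc => ⟨h1 hc, fun h => h3 (h ▸ hc), fun h => h4 (h ▸ hc)⟩⟩
  · rintro ⟨h1, h2⟩
    exact ⟨⟨fun c hc => (h2 c hc).1, h1⟩, fun h => (h2 _ h).2.1 rfl, fun h => (h2 _ h).2.2 rfl⟩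

theorem Tin_eOut_f_eq [Fintype V] [DecidableEq V] (G : SimpleGraph V) {e f : Sym2 V}
    (heE : e ∈ G.edgeSet) (hef : e ≠ f) (y : Sym2 V → ℝ) :
    Tin_eOut_f G e f y = treeSumThrough e (offWeight G e f y) := by
  classical
  rw [Tin_eOut_f, treeSumThrough, Finset.sum_filter]
  refine Finset.sum_congr rfl fun T _ => ?_
  rw [prod_offWeight, ← ite_and]
  congr 1
  rw [isSpanningTree_iff_top, eq_iff_iff]
  constructor
  · rintro ⟨⟨h1, h2⟩, h3, h4⟩
    refine ⟨⟨h2, h3⟩, fun c hc => ?_⟩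
    rw [Finset.mem_erase] at hc
    exact ⟨h1 hc.2, hc.1, fun h => h4 (h ▸ hc.2)⟩
  · rintro ⟨⟨h1, h2⟩, h3⟩
    refine ⟨⟨fun c hc => ?_, h1⟩, h2, fun h => ?_⟩
    · by_cases hce : c = e
      · rwa [hce]
      · exact (h3 c (Finset.mem_erase.mpr ⟨hce, hc⟩)).1
    · exact (h3 f (Finset.mem_erase.mpr ⟨hef.symm, h⟩)).2.2 rfl

open Classical in
theorem Tin_ef_eq [Fintype V] [DecidableEq V] (G : SimpleGraph V) {e f : Sym2 V}
    (heE : e ∈ G.edgeSet) (hfE : f ∈ G.edgeSet) (y : Sym2 V → ℝ) :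
    Tin_ef G e f y = ∑ T : Finset (Sym2 V), if IsSpanningTree ⊤ T ∧ e ∈ T ∧ f ∈ T
          then ∏ i ∈ (T.erase e).erase f, offWeight G e f y i else 0 := by
  rw [Tin_ef, Finset.sum_filter]
  refine Finset.sum_congr rfl fun T _ => ?_
  rw [prod_offWeight, ← ite_and]
  congr 1
  rw [isSpanningTree_iff_top, eq_iff_iff]
  constructor
  · rintro ⟨⟨h1, h2⟩, h3, h4⟩
    refine ⟨⟨h2, h3, h4⟩, fun c hc => ?_⟩
    simp only [Finset.mem_erase] at hc
    exact ⟨h1 hc.2.2, hc.2.1, hc.1⟩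
  · rintro ⟨⟨h1, h2, h3⟩, h4⟩
    refine ⟨⟨fun c hc => ?_, h1⟩, h2, h3⟩
    by_cases hce : c = e
    · rwa [hce]
    by_cases hcf : c = f
    · rwa [hcf]
    exact (h4 c (by simp only [Finset.mem_erase]; exact ⟨hcf, hce, hc⟩)).1

open Classical in
theorem Xval_eq [Fintype V] [DecidableEq V] (G : SimpleGraph V) {u₁ u₂ w₁ w₂ : V}
    (heE : s(u₁, u₂) ∈ G.edgeSet) (hfE : s(w₁, w₂) ∈ G.edgeSet) (p q : V) (y : Sym2 V → ℝ) :
    Xval G s(u₁, u₂) s(w₁, w₂) p q y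
      = ∑ F : Finset (Sym2 V), if IsTwoForest F ∧
          ¬ (SimpleGraph.fromEdgeSet (F : Set (Sym2 V))).Reachable u₁ u₂ ∧
          ¬ (SimpleGraph.fromEdgeSet (F : Set (Sym2 V))).Reachable w₁ w₂ ∧
          (SimpleGraph.fromEdgeSet (F : Set (Sym2 V))).Reachable p q
        then ∏ i ∈ F, offWeight G s(u₁, u₂) s(w₁, w₂) y i else 0 := by
  rw [Xval, Finset.sum_filter]
  refine Finset.sum_congr rfl fun F _ => ?_
  rw [prod_offWeight, ← ite_and]
  congr 1
  have hu := isSpanningTree_insert_iff F u₁ u₂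
  have hw := isSpanningTree_insert_iff F w₁ w₂
  rw [MemX, isSpanningTree_iff_top, isSpanningTree_iff_top G (insert s(w₁, w₂) F), eq_iff_iff]
  constructor
  · rintro ⟨⟨h1, h2, ⟨h3, h4⟩, -, h6⟩, h7⟩
    refine ⟨⟨(hu.mp ⟨h1, h4⟩).1, (hu.mp ⟨h1, h4⟩).2, (hw.mp ⟨h2, h6⟩).2, h7⟩, fun c hc => ?_⟩
    exact ⟨h3 (by simp [hc]), fun h => h1 (h ▸ hc), fun h => h2 (h ▸ hc)⟩
  · rintro ⟨⟨h1, h2, h3, h4⟩, h5⟩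
    obtain ⟨h6, h7⟩ := hu.mpr ⟨h1, h2⟩
    obtain ⟨h8, h9⟩ := hw.mpr ⟨h1, h3⟩
    have hF : ∀ a ∈ G.edgeSet, ((insert a F : Finset (Sym2 V)) : Set (Sym2 V)) ⊆ G.edgeSet := by
      intro a ha c hc
      rw [coe_insert, Set.mem_insert_iff] at hc
      rcases hc with rfl | hc
      · exact ha
      · exact (h5 c hc).1
    exact ⟨⟨h6, h8, ⟨hF _ heE, h7⟩, hF _ hfE, h9⟩, h4⟩

/-! ### Polarization -/

open Classical in
/-- In a graph with at most two components, the signed count of pairs (one end of `u₁u₂`, one end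
of `w₁w₂`) lying in different components vanishes unless both `u₁u₂` and `w₁w₂` are separated, and
is then `±2` according to which of the ends share a component. -/
theorem signed_separation_count (H : SimpleGraph V)
    (h3 : ∀ a b c : V, H.Reachable a b ∨ H.Reachable a c ∨ H.Reachable b c)
    (u₁ u₂ w₁ w₂ : V) (t : ℝ) :
    (((if ¬ H.Reachable u₁ w₁ then t else 0) + if ¬ H.Reachable u₂ w₂ then t else 0)
        - if ¬ H.Reachable u₁ w₂ then t else 0) - (if ¬ H.Reachable u₂ w₁ then t else 0)
      = 2 * ((if ¬ H.Reachable u₁ u₂ ∧ ¬ H.Reachable w₁ w₂ ∧ H.Reachable u₂ w₁ then t else 0)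
        - if ¬ H.Reachable u₁ u₂ ∧ ¬ H.Reachable w₁ w₂ ∧ H.Reachable u₂ w₂ then t else 0) := by
  have tr : ∀ {a b c}, H.Reachable a b → H.Reachable b c → H.Reachable a c :=
    fun h1 h2 => h1.trans h2
  have sy : ∀ {a b}, H.Reachable a b → H.Reachable b a := fun h1 => h1.symm
  by_cases hu : H.Reachable u₁ u₂
  · have e1 : H.Reachable u₁ w₁ ↔ H.Reachable u₂ w₁ := ⟨fun h => tr (sy hu) h, fun h => tr hu h⟩
    have e2 : H.Reachable u₁ w₂ ↔ H.Reachable u₂ w₂ := ⟨fun h => tr (sy hu) h, fun h => tr hu h⟩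
    simp only [e1, e2, hu, not_true, false_and, if_false]
    ring
  by_cases hv : H.Reachable w₁ w₂
  · have e1 : H.Reachable u₁ w₁ ↔ H.Reachable u₁ w₂ := ⟨fun h => tr h hv, fun h => tr h (sy hv)⟩
    have e2 : H.Reachable u₂ w₁ ↔ H.Reachable u₂ w₂ := ⟨fun h => tr h hv, fun h => tr h (sy hv)⟩
    simp only [e1, e2, hv, not_true, false_and, and_false, if_false]
    ring
  have e1 : H.Reachable u₁ w₁ ↔ H.Reachable u₂ w₂ := by
    constructor
    · intro h
      rcases h3 u₁ u₂ w₂ with h' | h' | h'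
      · exact absurd h' hu
      · exact absurd (tr (sy h) h') hv
      · exact h'
    · intro h
      rcases h3 u₁ u₂ w₁ with h' | h' | h'
      · exact absurd h' hu
      · exact h'
      · exact absurd (tr (sy h') h) hv
  have e2 : H.Reachable u₁ w₂ ↔ H.Reachable u₂ w₁ := by
    constructor
    · intro h
      rcases h3 u₁ u₂ w₁ with h' | h' | h'
      · exact absurd h' hu
      · exact absurd (tr (sy h') h) hv
      · exact h'
    · intro h
      rcases h3 u₁ u₂ w₂ with h' | h' | h'
      · exact absurd h' hu
      · exact h'
      · exact absurd (tr (sy h) h') hv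
  have e3 : H.Reachable u₂ w₂ ↔ ¬ H.Reachable u₂ w₁ := by
    constructor
    · exact fun h h' => hv (tr (sy h') h)
    · intro h
      rcases h3 u₂ w₁ w₂ with h' | h' | h'
      · exact absurd h' h
      · exact h'
      · exact absurd h' hv
  by_cases h : H.Reachable u₂ w₁ <;> simp [e1, e2, e3, hu, hv, h] <;> ring

/-- The polarization of the quadratic form `u, v ↦ treeSumThrough s(u, v)` at the two edges is twice the
signed forest sum `X⁺ - X⁻`. -/
theorem treeSumThrough_polarization [Fintype V] [DecidableEq V] (G : SimpleGraph V)
    {u₁ u₂ w₁ w₂ : V} (heE : s(u₁, u₂) ∈ G.edgeSet) (hfE : s(w₁, w₂) ∈ G.edgeSet)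
    (y : Sym2 V → ℝ) :
    let z := offWeight G s(u₁, u₂) s(w₁, w₂) y
    treeSumThrough s(u₁, w₁) z + treeSumThrough s(u₂, w₂) z
        - treeSumThrough s(u₁, w₂) z - treeSumThrough s(u₂, w₁) z
      = 2 * (Xval G s(u₁, u₂) s(w₁, w₂) u₂ w₁ y - Xval G s(u₁, u₂) s(w₁, w₂) u₂ w₂ y) := by
  classical
  intro z
  rw [Xval_eq G heE hfE, Xval_eq G heE hfE]
  simp only [treeSumThrough_eq_sum_forest]
  rw [← Finset.sum_sub_distrib, ← Finset.sum_add_distrib, ← Finset.sum_sub_distrib,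
    ← Finset.sum_sub_distrib, Finset.mul_sum]
  refine Finset.sum_congr rfl fun F _ => ?_
  by_cases hF : IsTwoForest F
  · simp only [hF, true_and]
    convert signed_separation_count (SimpleGraph.fromEdgeSet (F : Set (Sym2 V))) hF.2
      u₁ u₂ w₁ w₂ (∏ i ∈ F, z i)
  · simp [hF]

open Matrix in
theorem groundedLaplacian_adjugate_symm [Fintype V] [DecidableEq V] (r : V) (z : Sym2 V → ℝ)
    (a b : {v : V // v ≠ r} → ℝ) :
    a ⬝ᵥ (groundedLaplacian r z).adjugate *ᵥ b = b ⬝ᵥ (groundedLaplacian r z).adjugate *ᵥ a := by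
  have h : (groundedLaplacian r z)ᵀ = groundedLaplacian r z := by
    simp [groundedLaplacian, transpose_sum, transpose_smul, transpose_vecMulVec]
  nth_rewrite 1 [← h]
  rw [← adjugate_transpose, mulVec_transpose, dotProduct_comm, dotProduct_mulVec]

/-! ### The Rayleigh identity -/

/-- **Theorem 1** (Rayleigh identity for graphs).  For a finite connected simple graph `G`,
distinct oriented edges `e = s(u₁,u₂)` and `f = s(w₁,w₂)` of `G`, and any weighting `y`:
`T_e^f · T_f^e − T_{ef} · T^{ef} = (X⁺ − X⁻)²`. -/
theorem rayleigh_identity [Fintype V] [DecidableEq V]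
    (G : SimpleGraph V) (hG : G.Connected)
    (u₁ u₂ w₁ w₂ : V) (e f : Sym2 V)
    (he : e = s(u₁, u₂)) (hf : f = s(w₁, w₂))
    (heE : e ∈ G.edgeSet) (hfE : f ∈ G.edgeSet) (hef : e ≠ f)
    (y : Sym2 V → ℝ) :
    Tin_eOut_f G e f y * Tin_eOut_f G f e y - Tin_ef G e f y * Tout_ef G e f y
      = (Xval G e f u₂ w₁ y - Xval G e f u₂ w₂ y) ^ 2 := by
  classical
  have hX := treeSumThrough_polarization G (he ▸ heE) (hf ▸ hfE) y
  rw [← he, ← hf] at hX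
  let r := u₁
  have hTf : Tin_eOut_f G f e y = treeSumThrough f (offWeight G e f y) := by
    rw [Tin_eOut_f_eq G hfE hef.symm, offWeight_comm]
  rw [Tin_eOut_f_eq G heE hef, hTf, Tout_ef_eq_det G r, Tin_ef_eq G heE hfE]
  have h1 := det_groundedLaplacian_add_single r f (offWeight G e f y + Pi.single e 1)
  have h2 := det_groundedLaplacian_add_single r e (offWeight G e f y)
  have h3 := treeSumThrough_add_single hef.symm (offWeight G e f y)
  simp only [and_comm (a := f ∈ _), Finset.erase_right_comm (a := f)] at h3
  generalize offWeight G e f y = z at *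
  have h4 := det_add_two_rank_one (groundedLaplacian r z)
    (groundedVertex ℝ r u₁ - groundedVertex ℝ r u₂) (groundedVertex ℝ r w₁ - groundedVertex ℝ r w₂)
  rw [← groundedLaplacian_add_single, ← groundedLaplacian_add_single, ← he, ← hf, h1, h2, h3,
    dotProduct_adjugate_eq_treeSumThrough, dotProduct_adjugate_eq_treeSumThrough,
    groundedLaplacian_adjugate_symm r z (groundedVertex ℝ r w₁ - groundedVertex ℝ r w₂),
    ← he, ← hf] at h4
  simp only [← dotProduct_adjugate_eq_treeSumThrough r u₁ w₁,
    ← dotProduct_adjugate_eq_treeSumThrough r u₁ w₂,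
    ← dotProduct_adjugate_eq_treeSumThrough r u₂ w₁,
    ← dotProduct_adjugate_eq_treeSumThrough r u₂ w₂] at hX
  simp only [Matrix.mulVec_sub, dotProduct_sub, sub_dotProduct] at hX h4
  have s1 := groundedLaplacian_adjugate_symm r z (groundedVertex ℝ r w₁) (groundedVertex ℝ r u₁)
  have s2 := groundedLaplacian_adjugate_symm r z (groundedVertex ℝ r w₁) (groundedVertex ℝ r u₂)
  have s3 := groundedLaplacian_adjugate_symm r z (groundedVertex ℝ r w₂) (groundedVertex ℝ r u₁)
  have s4 := groundedLaplacian_adjugate_symm r z (groundedVertex ℝ r w₂) (groundedVertex ℝ r u₂)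
  rw [s1, s2, s3, s4] at hX
  have hX' : Xval G e f u₂ w₁ y - Xval G e f u₂ w₂ y
      = -((groundedVertex ℝ r u₁ - groundedVertex ℝ r u₂) ⬝ᵥ
        (groundedLaplacian r z).adjugate.mulVec
          (groundedVertex ℝ r w₁ - groundedVertex ℝ r w₂)) := by
    simp only [Matrix.mulVec_sub, dotProduct_sub, sub_dotProduct]
    linarith
  rw [hX']
  simp only [Matrix.mulVec_sub, dotProduct_sub, sub_dotProduct]
  linear_combination -h4
end

section
/- Let G be a finite connected simple graph and let e, f be distinct edges of G. Then for every weighting y : E(G) → ℝ with y(c) > 0 for all c ∈ E(G), T_e^f(G;y)·T_f^e(G;y) − T_{ef}(G;y)·T^{ef}(G;y) ≥ 0. -/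
/-!
By the weighted matrix-tree theorem the generating function of spanning trees is the determinant
of the Laplacian grounded at a root `r` (`det_groundedLap`). As a function of the weights `a` of
`e` and `b` of `f` it is `D(a, b) = T^{ef} + a T_e^f + b T_f^e + ab T_{ef}` (`sum_update`), so the
claim is `D(0,0) D(1,1) ≤ D(1,0) D(0,1)`. On the matrix side `D(a, b) = det (A + a vvᵀ + b wwᵀ)`
with `A` symmetric and `v`, `w` the incidence vectors of `e`, `f`. If `A` is invertible, the matrix
determinant lemma gives `D(1,0) D(0,1) - D(0,0) D(1,1) = (det A · vᵀA⁻¹w)² ≥ 0`, and the general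
case follows by continuity (`rank_two_ineq`).

The matrix-tree theorem is obtained from the Cauchy–Binet formula (`det_gram`) for the incidence
matrix with an added unit row at `r`: a maximal minor is `±1` if the chosen edges form a spanning
tree (every unit vector is an integer combination of the rows), and `0` otherwise.
-/

open Finset

variable {V : Type*}

open Matrix

/-! ### The Cauchy–Binet formula -/

/-- The summand of a choice function `p` in the multilinear expansion of `det (A * C)` along the
rows of `A * C`; the Cauchy–Binet formula groups these by the image of `p`. -/
noncomputable def cbTerm {n ι : Type*} [Fintype n] [DecidableEq n]
    (A : Matrix n ι ℝ) (C : Matrix ι n ℝ) (p : n → ι) : ℝ :=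
  (∏ i, A i (p i)) * (C.submatrix p id).det

lemma det_mul_eq_sum_cbTerm {n ι : Type*} [Fintype n] [DecidableEq n] [Fintype ι] [DecidableEq ι]
    (A : Matrix n ι ℝ) (C : Matrix ι n ℝ) :
    (A * C).det = ∑ p : n → ι, cbTerm A C p := by
  have h1 : (A * C) = fun i => ∑ c, A i c • C c := by
    ext i j
    simp [mul_apply]
  have h2 := (detRowAlternating (n := n) (R := ℝ)).toMultilinearMap.map_sum
    (fun i c => A i c • C c)
  calc (A * C).det = detRowAlternating (fun i => ∑ c, A i c • C c) := by rw [h1]; rfl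
    _ = ∑ p : n → ι, detRowAlternating (fun i => A i (p i) • C (p i)) := h2
    _ = _ := by
      refine Finset.sum_congr rfl fun p _ => ?_
      exact (detRowAlternating (n := n) (R := ℝ)).toMultilinearMap.map_smul_univ
        (fun i => A i (p i)) (fun i => C (p i))

lemma cbTerm_eq_zero {n ι : Type*} [Fintype n] [DecidableEq n]
    (A : Matrix n ι ℝ) (C : Matrix ι n ℝ) (p : n → ι) (hp : ¬ Function.Injective p) :
    cbTerm A C p = 0 := by
  unfold Function.Injective at hp
  push Not at hp
  obtain ⟨i, j, hij, hne⟩ := hp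
  rw [cbTerm, det_zero_of_row_eq hne, mul_zero]
  ext k
  simp [hij]

/-- Choice functions with image the range of an injective `ψ` are the `ψ ∘ q` with `q` a
permutation, so together they contribute the expansion of the determinant of a product of two
square matrices. -/
lemma sum_cbTerm_image {n ι : Type*} [Fintype n] [DecidableEq n] [Fintype ι] [DecidableEq ι]
    (A : Matrix n ι ℝ) (C : Matrix ι n ℝ) (ψ : n → ι) (hψ : Function.Injective ψ) :
    ∑ p : n → ι with univ.image p = univ.image ψ, cbTerm A C p
      = (A.submatrix id ψ).det * (C.submatrix ψ id).det := by
  rw [← det_mul, det_mul_eq_sum_cbTerm]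
  symm
  have h0 : ∑ q : n → n, cbTerm (A.submatrix id ψ) (C.submatrix ψ id) q
      = ∑ q : n → n with Function.Injective q,
        cbTerm (A.submatrix id ψ) (C.submatrix ψ id) q := by
    symm
    refine Finset.sum_subset (Finset.filter_subset _ _) fun q _ hq => ?_
    exact cbTerm_eq_zero _ _ _ (by simpa using hq)
  rw [h0]
  refine Finset.sum_of_injOn (fun q => ψ ∘ q) ?_ ?_ ?_ ?_
  · intro q _ q' _ h
    funext i
    exact hψ (congrFun h i)
  · intro q hq
    simp only [coe_filter, mem_univ, true_and, Set.mem_ofPred_eq] at hq ⊢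
    rw [← Finset.image_image, Finset.image_univ_of_surjective
      (Finite.injective_iff_surjective.mp hq)]
  · intro p hp hnot
    exfalso
    simp only [mem_filter, mem_univ, true_and] at hp
    have hmem : ∀ i, ∃ j, ψ j = p i := by
      intro i
      have : p i ∈ univ.image ψ := hp ▸ mem_image_of_mem p (mem_univ i)
      simpa using this
    choose q hq using hmem
    refine hnot ⟨q, ?_, funext hq⟩
    simp only [coe_filter, mem_univ, true_and, Set.mem_ofPred_eq]
    have hc : (univ.image p).card = Fintype.card n := by
      rw [hp, card_image_of_injective _ hψ, card_univ]
    have hpi : Function.Injective p := by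
      rw [← card_univ, card_image_iff] at hc
      simpa using hc
    intro a b hab
    apply hpi
    rw [← hq, ← hq, hab]
  · intro q _
    rfl

open Classical in
/-- The squared maximal minor of `B` on the rows in `S`. It is `0` when `S` has the wrong
cardinality; otherwise the choice of enumeration of `S` is immaterial because of the square. -/
noncomputable def minorSq {n ι : Type*} [Fintype n] [DecidableEq n] [DecidableEq ι]
    (B : Matrix ι n ℤ) (S : Finset ι) : ℤ :=
  if h : ∃ ψ : n → ι, Function.Injective ψ ∧ univ.image ψ = S then
    (B.submatrix h.choose id).det ^ 2 else 0

lemma minorSq_cases {n ι : Type*} [Fintype n] [DecidableEq n] [DecidableEq ι]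
    (B : Matrix ι n ℤ) (S : Finset ι) :
    (S.card ≠ Fintype.card n ∧ minorSq B S = 0) ∨
    (∃ ψ : n → ι, Function.Injective ψ ∧ univ.image ψ = S ∧
      minorSq B S = (B.submatrix ψ id).det ^ 2) := by
  by_cases h : ∃ ψ : n → ι, Function.Injective ψ ∧ univ.image ψ = S
  · right
    refine ⟨h.choose, h.choose_spec.1, h.choose_spec.2, ?_⟩
    rw [minorSq, dif_pos h]
  · left
    refine ⟨fun hc => h ?_, ?_⟩
    · have e : n ≃ S := Fintype.equivOfCardEq (by simp [hc])
      refine ⟨fun i => (e i : ι), fun a b hab => e.injective (Subtype.ext hab), ?_⟩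
      ext c
      simp only [mem_image, mem_univ, true_and]
      refine ⟨?_, fun hc => ⟨e.symm ⟨c, hc⟩, by simp⟩⟩
      rintro ⟨a, rfl⟩
      exact (e a).2
    · rw [minorSq, dif_neg h]

/-- Cauchy–Binet for a weighted Gram matrix. -/
lemma det_gram {n ι : Type*} [Fintype n] [DecidableEq n] [Fintype ι] [DecidableEq ι]
    (B : Matrix ι n ℤ) (w : ι → ℝ) :
    ((B.map (Int.cast : ℤ → ℝ))ᵀ * diagonal w * B.map (Int.cast : ℤ → ℝ)).det
      = ∑ S : Finset ι, (∏ c ∈ S, w c) * minorSq B S := by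
  rw [det_mul_eq_sum_cbTerm, ← Finset.sum_fiberwise_of_maps_to
    (g := fun p : n → ι => univ.image p) (t := univ) (fun _ _ => mem_univ _)]
  refine Finset.sum_congr rfl fun S _ => ?_
  rcases minorSq_cases B S with ⟨hc, h0⟩ | ⟨ψ, hψ, rfl, h1⟩
  · rw [h0, Int.cast_zero, mul_zero]
    refine Finset.sum_eq_zero fun p hp => cbTerm_eq_zero _ _ _ fun hpi => hc ?_
    rw [← (mem_filter.mp hp).2, card_image_of_injective _ hpi, card_univ]
  · rw [sum_cbTerm_image _ _ ψ hψ, h1]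
    have e1 : (((B.map (Int.cast : ℤ → ℝ))ᵀ * diagonal w).submatrix id ψ)
        = ((B.submatrix ψ id).map (Int.cast : ℤ → ℝ))ᵀ * diagonal (w ∘ ψ) := by
      ext i j
      simp [mul_diagonal]
    have e2 : (B.map (Int.cast : ℤ → ℝ)).submatrix ψ id
        = (B.submatrix ψ id).map (Int.cast : ℤ → ℝ) := rfl
    have e3 : ((B.submatrix ψ id).map (Int.cast : ℤ → ℝ)).det
        = ((B.submatrix ψ id).det : ℝ) := (Int.cast_det _).symm
    rw [e1, e2, det_mul, det_transpose, det_diagonal, e3, prod_image (fun a _ b _ h => hψ h)]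
    push_cast
    simp only [Function.comp_apply]
    ring

/-! ### The weighted matrix-tree theorem -/

/-- Rows are indexed by the edges together with one extra row `none`, the unit vector of the
root `r`; the row of an edge is its incidence vector for the orientation chosen by `Quot.out`. -/
noncomputable def incRooted [DecidableEq V] (r : V) : Matrix (Option (Sym2 V)) V ℤ :=
  fun o => match o with
    | none => Pi.single r 1
    | some c => Pi.single (Quot.out c).1 1 - Pi.single (Quot.out c).2 1

lemma out_cases (c : Sym2 V) (u w : V) (h : c = s(u, w)) :
    ((Quot.out c).1 = u ∧ (Quot.out c).2 = w) ∨ ((Quot.out c).1 = w ∧ (Quot.out c).2 = u) := by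
  have h1 : s((Quot.out c).1, (Quot.out c).2) = c := Quot.out_eq c
  exact Sym2.eq_iff.mp (h1.trans h)

/-- A singular row selection is detected by a nonzero vector orthogonal to the selected rows. -/
lemma det_incRooted_eq_zero [Fintype V] [DecidableEq V] (r : V) (ψ : V → Option (Sym2 V))
    (x : V → ℤ) (hx : x ≠ 0) (h0 : none ∈ univ.image ψ → x r = 0)
    (h1 : ∀ c, some c ∈ univ.image ψ → x (Quot.out c).1 = x (Quot.out c).2) :
    ((incRooted r).submatrix ψ id).det = 0 := by
  rw [← exists_mulVec_eq_zero_iff]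
  refine ⟨x, hx, ?_⟩
  funext i
  have hi : ψ i ∈ univ.image ψ := mem_image_of_mem _ (mem_univ _)
  change (incRooted r (ψ i)) ⬝ᵥ x = 0
  cases h : ψ i with
  | none =>
    rw [h] at hi
    simp [incRooted, h0 hi]
  | some c =>
    rw [h] at hi
    simp [incRooted, sub_dotProduct, h1 c hi]

/-- If the selected rows are the root and the edges of a connected spanning graph, then every unit
vector is an integer combination of them (walk from the root), so the determinant is `±1`. -/
lemma det_incRooted_sq [Fintype V] [DecidableEq V] (r : V) (ψ : V → Option (Sym2 V))
    (T : Finset (Sym2 V)) (hT : univ.image ψ = insertNone T)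
    (hconn : (SimpleGraph.fromEdgeSet (T : Set (Sym2 V))).Connected) :
    ((incRooted r).submatrix ψ id).det ^ 2 = 1 := by
  set N := (incRooted r).submatrix ψ id with hN
  have hrow : ∀ o ∈ insertNone T, ∃ x : V → ℤ, x ᵥ* N = incRooted r o := by
    intro o ho
    rw [← hT, mem_image] at ho
    obtain ⟨i, _, rfl⟩ := ho
    exact ⟨Pi.single i 1, by rw [single_one_vecMul]; rfl⟩
  have step : ∀ u w : V, (SimpleGraph.fromEdgeSet (T : Set (Sym2 V))).Walk u w →
      (∃ x : V → ℤ, x ᵥ* N = Pi.single u 1) → ∃ x : V → ℤ, x ᵥ* N = Pi.single w 1 := by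
    intro u w p
    induction p with
    | nil => exact id
    | @cons u v w h p ih =>
      rintro ⟨x, hx⟩
      apply ih
      rw [SimpleGraph.fromEdgeSet_adj] at h
      obtain ⟨z, hz⟩ := hrow (some s(u, v)) (by simpa using h.1)
      rcases out_cases _ u v rfl with ⟨h1, h2⟩ | ⟨h1, h2⟩
      · refine ⟨x - z, ?_⟩
        rw [sub_vecMul, hx, hz]
        simp only [incRooted, h1, h2]
        abel
      · refine ⟨x + z, ?_⟩
        rw [add_vecMul, hx, hz]
        simp only [incRooted, h1, h2]
        abel
  have hall : ∀ u : V, ∃ x : V → ℤ, x ᵥ* N = Pi.single u 1 := by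
    intro u
    obtain ⟨p⟩ := hconn.preconnected r u
    exact step r u p (hrow none (by simp))
  choose X hX using hall
  have hXN : (Matrix.of X) * N = 1 := by
    ext u v
    have := congrFun (hX u) v
    rw [one_apply, ← Pi.single_apply, ← Pi.single_comm]
    rw [← this]
    rfl
  have hd : (Matrix.of X).det * N.det = 1 := by rw [← det_mul, hXN, det_one]
  have hu : IsUnit N.det := IsUnit.of_mul_eq_one_right _ hd
  exact Int.isUnit_sq hu

lemma minorSq_of_none_notMem [Fintype V] [DecidableEq V] (r : V) (S : Finset (Option (Sym2 V)))
    (hS : none ∉ S) : minorSq (incRooted r) S = 0 := by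
  rcases minorSq_cases (incRooted r) S with ⟨_, h⟩ | ⟨ψ, _, rfl, h⟩
  · exact h
  · rw [h, det_incRooted_eq_zero r ψ 1 (fun h => one_ne_zero (congrFun h r))
      (fun hn => (hS hn).elim) (fun _ _ => rfl)]
    simp

lemma card_edgeSet_fromEdgeSet (G : SimpleGraph V) (T : Finset (Sym2 V))
    (hT : (T : Set (Sym2 V)) ⊆ G.edgeSet) :
    Nat.card (SimpleGraph.fromEdgeSet (T : Set (Sym2 V))).edgeSet = T.card := by
  have : (SimpleGraph.fromEdgeSet (T : Set (Sym2 V))).edgeSet = (T : Set (Sym2 V)) := by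
    rw [SimpleGraph.edgeSet_fromEdgeSet, sdiff_eq_left, Set.disjoint_left]
    intro c hc hd
    exact G.not_isDiag_of_mem_edgeSet (hT hc) hd
  rw [this]
  simp

open Classical in
/-- Unimodularity: the squared minor is the indicator of spanning trees. -/
lemma minorSq_insertNone [Fintype V] [DecidableEq V] (G : SimpleGraph V) (r : V)
    (T : Finset (Sym2 V)) (hT : (T : Set (Sym2 V)) ⊆ G.edgeSet) :
    minorSq (incRooted r) (insertNone T) = if IsSpanningTree G T then 1 else 0 := by
  have htree : IsSpanningTree G T ↔
      (SimpleGraph.fromEdgeSet (T : Set (Sym2 V))).Connected ∧ T.card + 1 = Fintype.card V := by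
    rw [← Nat.card_eq_fintype_card, ← card_edgeSet_fromEdgeSet G T hT,
      ← SimpleGraph.isTree_iff_connected_and_card, SimpleGraph.isTree_iff]
    exact ⟨fun h => ⟨h.2.1, h.2.2⟩, fun h => ⟨hT, h.1, h.2⟩⟩
  rcases minorSq_cases (incRooted r) (insertNone T) with ⟨hc, h⟩ | ⟨ψ, hψ, himg, h⟩
  · rw [h, if_neg]
    intro ht
    exact hc (by rw [card_insertNone]; exact (htree.mp ht).2)
  · have hc : T.card + 1 = Fintype.card V := by
      rw [← card_insertNone, ← himg, card_image_of_injective _ hψ, card_univ]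
    rw [h]
    by_cases hconn : (SimpleGraph.fromEdgeSet (T : Set (Sym2 V))).Connected
    · rw [det_incRooted_sq r ψ T himg hconn, if_pos (htree.mpr ⟨hconn, hc⟩)]
    · rw [if_neg (fun ht => hconn (htree.mp ht).1)]
      -- the indicator of the vertices not reachable from the root is orthogonal to all rows
      have hex : ∃ u, ¬ (SimpleGraph.fromEdgeSet (T : Set (Sym2 V))).Reachable r u := by
        by_contra! hall
        exact hconn ((SimpleGraph.connected_iff_exists_forall_reachable _).mpr ⟨r, hall⟩)
      obtain ⟨u, hu⟩ := hex
      rw [det_incRooted_eq_zero r ψ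
        (fun v => if (SimpleGraph.fromEdgeSet (T : Set (Sym2 V))).Reachable r v then 0 else 1)]
      · simp
      · intro h0
        have := congrFun h0 u
        simp [hu] at this
      · intro _
        simp
      · intro c hcm
        rw [himg] at hcm
        have hcT : c ∈ T := by simpa using hcm
        have hc' : s((Quot.out c).1, (Quot.out c).2) = c := Quot.out_eq c
        have hadj : (SimpleGraph.fromEdgeSet (T : Set (Sym2 V))).Adj
            (Quot.out c).1 (Quot.out c).2 := by
          rw [SimpleGraph.fromEdgeSet_adj, hc']
          refine ⟨hcT, fun heq => ?_⟩
          apply G.not_isDiag_of_mem_edgeSet (hT hcT)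
          rw [← hc', heq]
          exact Sym2.mk_isDiag_iff.mpr rfl
        have : (SimpleGraph.fromEdgeSet (T : Set (Sym2 V))).Reachable r (Quot.out c).1 ↔
            (SimpleGraph.fromEdgeSet (T : Set (Sym2 V))).Reachable r (Quot.out c).2 :=
          ⟨fun h => h.trans hadj.reachable, fun h => h.trans hadj.symm.reachable⟩
        simp only [this]

open Classical in
/-- The weights on the rows of `incRooted`: non-edges of `G` are switched off. -/
noncomputable def rowWeight (G : SimpleGraph V) (y : Sym2 V → ℝ) : Option (Sym2 V) → ℝ
  | none => 1
  | some c => if c ∈ G.edgeSet then y c else 0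

/-- The weighted Laplacian of `G`, grounded at `r` by adding `1` to the `(r, r)` entry. -/
noncomputable def groundedLap [Fintype V] [DecidableEq V] (G : SimpleGraph V) (r : V)
    (y : Sym2 V → ℝ) : Matrix V V ℝ :=
  ((incRooted r).map (Int.cast : ℤ → ℝ))ᵀ * diagonal (rowWeight G y)
    * (incRooted r).map (Int.cast : ℤ → ℝ)

open Classical in
/-- Weighted matrix-tree theorem. -/
lemma det_groundedLap [Fintype V] [DecidableEq V] (G : SimpleGraph V) (r : V)
    (y : Sym2 V → ℝ) :
    (groundedLap G r y).det = ∑ T with IsSpanningTree G T, edgeWeight y T := by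
  rw [groundedLap, det_gram, Finset.sum_filter]
  symm
  refine Finset.sum_of_injOn (fun T => insertNone T) (insertNone.injective.injOn)
    (fun _ _ => mem_coe.mpr (mem_univ _)) ?_ ?_
  · intro S _ hS
    rw [minorSq_of_none_notMem r S, Int.cast_zero, mul_zero]
    intro hn
    refine hS ⟨eraseNone S, mem_coe.mpr (mem_univ _), ?_⟩
    simp [insertNone_eraseNone, hn]
  · intro T _
    rw [prod_insertNone]
    by_cases hT : (T : Set (Sym2 V)) ⊆ G.edgeSet
    · rw [minorSq_insertNone G r T hT]
      have : ∏ c ∈ T, rowWeight G y (some c) = edgeWeight y T :=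
        Finset.prod_congr rfl fun c hc => if_pos (hT hc)
      rw [this]
      simp [rowWeight]
    · rw [if_neg (fun h => hT h.1)]
      obtain ⟨c, hc, hcG⟩ := Set.not_subset.mp hT
      rw [Finset.prod_eq_zero (mem_coe.mp hc) (if_neg hcG)]
      simp

/-! ### Rank-two updates of a symmetric matrix -/

/-- The incidence vector of an edge; it does not depend on `r`. -/
noncomputable def incVec [DecidableEq V] (r : V) (c : Sym2 V) : V → ℝ :=
  fun v => ((incRooted r (some c) v : ℤ) : ℝ)

lemma groundedLap_apply [Fintype V] [DecidableEq V] (G : SimpleGraph V) (r : V)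
    (y : Sym2 V → ℝ) (i j : V) :
    groundedLap G r y i j = ∑ o, rowWeight G y o * ((incRooted r o i : ℝ) * incRooted r o j) := by
  rw [groundedLap, mul_apply]
  refine Finset.sum_congr rfl fun o _ => ?_
  rw [mul_diagonal]
  simp only [transpose_apply, map_apply]
  ring

/-- Changing one edge weight is a rank-one update. -/
lemma groundedLap_update [Fintype V] [DecidableEq V] (G : SimpleGraph V) (r : V)
    (y : Sym2 V → ℝ) (e : Sym2 V) (he : e ∈ G.edgeSet) (hy : y e = 0) (a : ℝ) :
    groundedLap G r (Function.update y e a)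
      = groundedLap G r y + a • vecMulVec (incVec r e) (incVec r e) := by
  ext i j
  rw [Matrix.add_apply, groundedLap_apply, groundedLap_apply, ← sub_eq_iff_eq_add',
    ← Finset.sum_sub_distrib, Finset.sum_eq_single (some e)]
  · simp [rowWeight, he, hy, vecMulVec_apply, incVec]
  · intro o _ ho
    cases o with
    | none => simp [rowWeight]
    | some c =>
      have : c ≠ e := fun h => ho (by rw [h])
      simp [rowWeight, this]
  · intro h
    exact (h (mem_univ _)).elim

lemma groundedLap_isSymm [Fintype V] [DecidableEq V] (G : SimpleGraph V) (r : V)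
    (y : Sym2 V → ℝ) : (groundedLap G r y).IsSymm := by
  unfold groundedLap Matrix.IsSymm
  simp [Matrix.transpose_mul, Matrix.mul_assoc]

section RankTwo
variable {n : Type*} [Fintype n] [DecidableEq n]

/-- Matrix determinant lemma for two simultaneous symmetric rank-one updates. -/
lemma det_add_two (A : Matrix n n ℝ) (hA : IsUnit A.det) (v w : n → ℝ) (a b : ℝ) :
    (A + a • vecMulVec v v + b • vecMulVec w w).det
      = A.det * ((1 + a * (v ⬝ᵥ A⁻¹ *ᵥ v)) * (1 + b * (w ⬝ᵥ A⁻¹ *ᵥ w))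
          - a * b * ((v ⬝ᵥ A⁻¹ *ᵥ w) * (w ⬝ᵥ A⁻¹ *ᵥ v))) := by
  let U : Matrix n (Fin 2) ℝ := (Matrix.of ![a • v, b • w])ᵀ
  let W : Matrix (Fin 2) n ℝ := Matrix.of ![v, w]
  have h1 : A + a • vecMulVec v v + b • vecMulVec w w = A + U * W := by
    ext i j
    simp [U, W, mul_apply, vecMulVec_apply, Fin.sum_univ_two]
    ring
  have h2 : ∀ k l, (W * A⁻¹ * U) k l = W k ⬝ᵥ A⁻¹ *ᵥ (Uᵀ l) := by
    intro k l
    rw [Matrix.mul_assoc]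
    rfl
  rw [h1, det_add_mul _ _ hA, det_fin_two]
  have hW : W 0 = v ∧ W 1 = w := ⟨rfl, rfl⟩
  have hU : Uᵀ 0 = a • v ∧ Uᵀ 1 = b • w := ⟨rfl, rfl⟩
  simp only [Matrix.add_apply, h2, hW, hU, mulVec_smul, dotProduct_smul, smul_eq_mul,
    one_apply_eq, one_apply_ne zero_ne_one, one_apply_ne one_ne_zero]
  ring

lemma rank_two_of_isUnit (A : Matrix n n ℝ) (hs : A.IsSymm) (hA : IsUnit A.det) (v w : n → ℝ) :
    A.det * (A + vecMulVec v v + vecMulVec w w).det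
      ≤ (A + vecMulVec v v).det * (A + vecMulVec w w).det := by
  have h := det_add_two A hA v w
  have h11 := h 1 1
  have h10 := h 1 0
  have h01 := h 0 1
  have hsym : w ⬝ᵥ A⁻¹ *ᵥ v = v ⬝ᵥ A⁻¹ *ᵥ w := by
    rw [dotProduct_mulVec, ← mulVec_transpose, transpose_nonsing_inv, hs.eq, dotProduct_comm]
  simp only [one_smul, zero_smul, add_zero] at h11 h10 h01
  rw [h11, h10, h01, hsym]
  nlinarith [sq_nonneg (A.det * (v ⬝ᵥ A⁻¹ *ᵥ w))]

/-- The determinantal form of the Rayleigh inequality. A singular `A` is the limit of the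
invertible matrices `A + t`, as `det (A + t)` vanishes for finitely many `t` only. -/
lemma rank_two_ineq (A : Matrix n n ℝ) (hs : A.IsSymm) (v w : n → ℝ) :
    A.det * (A + vecMulVec v v + vecMulVec w w).det
      ≤ (A + vecMulVec v v).det * (A + vecMulVec w w).det := by
  let B : ℝ → Matrix n n ℝ := fun t => A + scalar n t
  have hBc : Continuous B := by
    have hd : Continuous fun t : ℝ => diagonal fun _ : n => t :=
      Continuous.matrix_diagonal (continuous_pi fun _ => continuous_id)
    exact continuous_const.add hd
  let s : Set ℝ := {t | (B t).det * (B t + vecMulVec v v + vecMulVec w w).det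
      ≤ (B t + vecMulVec v v).det * (B t + vecMulVec w w).det}
  have hclosed : IsClosed s := by
    refine isClosed_le ?_ ?_
    · exact hBc.matrix_det.mul
        ((hBc.add continuous_const).add continuous_const).matrix_det
    · exact (hBc.add continuous_const).matrix_det.mul (hBc.add continuous_const).matrix_det
  have hfin : {t : ℝ | (B t).det = 0}.Finite := by
    refine ((-A).charpoly.rootSet_finite ℝ).subset fun t ht => ?_
    rw [Polynomial.mem_rootSet]
    refine ⟨(charpoly_monic _).ne_zero, ?_⟩
    have := Matrix.eval_charpoly (-A) t
    rw [Polynomial.coe_aeval_eq_eval, this, sub_neg_eq_add, add_comm]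
    exact ht
  have hsub : {t : ℝ | (B t).det = 0}ᶜ ⊆ s := by
    intro t ht
    refine rank_two_of_isUnit (B t) ?_ (isUnit_iff_ne_zero.mpr ht) v w
    exact hs.add (by simp [Matrix.IsSymm])
  have hdense : Dense {t : ℝ | (B t).det = 0}ᶜ := hfin.countable.dense_compl ℝ
  have h0 : (0 : ℝ) ∈ s := by
    have := hclosed.closure_subset_iff.mpr hsub
    rw [hdense.closure_eq] at this
    exact this (Set.mem_univ _)
  simpa [s, B] using h0

end RankTwo

/-! ### Spanning trees through two given edges -/

open Classical in
/-- The generating function of spanning trees is affine in the weights of `e` and of `f`, with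
the four sums as coefficients. -/
lemma sum_update [Fintype V] [DecidableEq V] (G : SimpleGraph V) (e f : Sym2 V) (hef : e ≠ f)
    (y : Sym2 V → ℝ) (a b : ℝ) :
    ∑ T with IsSpanningTree G T, edgeWeight (Function.update (Function.update y e a) f b) T
      = Tout_ef G e f y + a * Tin_eOut_f G e f y + b * Tin_eOut_f G f e y
        + a * b * Tin_ef G e f y := by
  have hoff : ∀ S : Finset (Sym2 V), e ∉ S → f ∉ S →
      edgeWeight (Function.update (Function.update y e a) f b) S = edgeWeight y S := by
    intro S he hf
    refine Finset.prod_congr rfl fun c hc => ?_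
    rw [Function.update_of_ne (by rintro rfl; exact hf hc), Function.update_of_ne (by rintro rfl; exact he hc)]
  have hpull : ∀ (z : Sym2 V → ℝ) (S : Finset (Sym2 V)) (c : Sym2 V), c ∈ S →
      edgeWeight z S = z c * edgeWeight z (S.erase c) := fun z S c hc =>
    (Finset.mul_prod_erase S z hc).symm
  unfold Tout_ef Tin_eOut_f Tin_ef
  simp only [Finset.mul_sum, Finset.sum_filter]
  rw [← Finset.sum_add_distrib, ← Finset.sum_add_distrib, ← Finset.sum_add_distrib]
  refine Finset.sum_congr rfl fun T _ => ?_
  by_cases hT : IsSpanningTree G T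
  swap
  · simp [hT]
  by_cases he : e ∈ T <;> by_cases hf : f ∈ T
  · have hf' : f ∈ T.erase e := mem_erase.mpr ⟨hef.symm, hf⟩
    rw [hpull _ T e he, hpull _ (T.erase e) f hf', hoff _ (by simp) (by simp)]
    simp [hT, he, hf, hef]
    ring
  · rw [hpull _ T e he, hoff _ (by simp) (by simp [hf])]
    simp [hT, he, hf, hef]
  · rw [hpull _ T f hf, hoff _ (by simp [he]) (by simp)]
    simp [hT, he, hf]
  · rw [hoff _ he hf]
    simp [hT, he, hf]

/-- **Rayleigh monotonicity** (nonnegativity form).  For a finite connected simple graph `G`,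
distinct edges `e, f` of `G`, and any weighting `y` that is positive on the edges of `G`:
`T_e^f · T_f^e − T_{ef} · T^{ef} ≥ 0`. -/
theorem rayleigh_nonneg [Fintype V] [DecidableEq V]
    (G : SimpleGraph V) (hG : G.Connected)
    (e f : Sym2 V) (heE : e ∈ G.edgeSet) (hfE : f ∈ G.edgeSet) (hef : e ≠ f)
    (y : Sym2 V → ℝ) (hy : ∀ c ∈ G.edgeSet, 0 < y c) :
    0 ≤ Tin_eOut_f G e f y * Tin_eOut_f G f e y - Tin_ef G e f y * Tout_ef G e f y := by
  obtain ⟨r⟩ := hG.nonempty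
  let y₀ := Function.update (Function.update y e 0) f 0
  have key : ∀ a b : ℝ, (groundedLap G r y₀ + a • vecMulVec (incVec r e) (incVec r e)
      + b • vecMulVec (incVec r f) (incVec r f)).det
      = Tout_ef G e f y + a * Tin_eOut_f G e f y + b * Tin_eOut_f G f e y
        + a * b * Tin_ef G e f y := by
    intro a b
    rw [← groundedLap_update G r y₀ e heE (by simp [y₀, hef]),
      ← groundedLap_update G r _ f hfE (by simp [y₀, hef.symm]), det_groundedLap,
      ← sum_update G e f hef]
    congr! 2
    funext c
    by_cases hcf : c = f
    · simp [hcf]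
    · by_cases hce : c = e
      · simp [hce, hef]
      · simp [hcf, hce, y₀]
  have h := rank_two_ineq _ (groundedLap_isSymm G r y₀) (incVec r e) (incVec r f)
  have h00 := key 0 0
  have h10 := key 1 0
  have h01 := key 0 1
  have h11 := key 1 1
  simp only [one_smul, zero_smul, add_zero] at h00 h10 h01 h11
  rw [h00, h10, h01, h11] at h
  linarith
end

section
/- Let G be a finite connected simple graph with at least two vertices and let e, f be distinct edges of G. Suppose y, y' : E(G) → ℝ satisfy y(c) = y'(c) > 0 for all c ≠ f and 0 < y(f) ≤ y'(f). Then the effective conductance does not decrease: T^e(G;y)/T_e(G;y) ≤ T^e(G;y')/T_e(G;y'). (Here T_e(G;y) > 0 and T_e(G;y') > 0 since G is connected, so every edge lies in some spanning tree.) -/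
/-!
The proof goes through Dirichlet's principle, with the equilibrium potential written as a sum over
spanning trees. Let `e = s(a, b)` and let `U v` be the total weight of the forests `T ∖ {e}`, over
spanning trees `T ∋ e`, in which `v` lies in the component of `a`. Then `U a = T_e` and `U b = 0`.

The central identity (`sum_conductance_mul_potential`) says that for every `g : V → ℝ`
`∑ c(v, w) (U v - U w) (g v - g w) = 2 T^e (g a - g b)`,
the sum being over ordered pairs and `c` being the conductances of `G ∖ {e}`.
Adding an edge `vw` to a forest `T ∖ {e}` whose two components it joins gives a spanning tree
avoiding `e`, and this is a bijection (`sum_exchange`), so that the left side becomes a sum over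
spanning trees `T'` avoiding `e` of the increments of `g` along the edges of `T'` whose removal
separates `a` from `b`; for each `T'` these increments add up to `g a - g b`
(`IsSpanningTree.sum_cut`).

With `g = U` the identity gives the energy `2 T^e T_e` of `U`. If `U'` is the potential for `y'`,
expanding the nonnegative energy of `T_e(y') U - T_e(y) U'` with respect to `y`, and bounding the
energy of `U'` with respect to `y` by its energy with respect to `y' ≥ y`, gives
`T_e(y')² T^e(y) T_e(y) ≤ T_e(y)² T^e(y') T_e(y')`, which is the claim.
-/

open Finset

variable {V : Type*}

open Classical in
/-- `T^e(G;y) = Σ_{T : e ∉ T} y^T` over spanning trees `T` of `G`. -/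
noncomputable def Tout_e [Fintype V] [DecidableEq V] (G : SimpleGraph V)
    (e : Sym2 V) (y : Sym2 V → ℝ) : ℝ :=
  ∑ T ∈ univ.filter (fun T => IsSpanningTree G T ∧ e ∉ T), edgeWeight y T

open Classical in
/-- `T_e(G;y) = Σ_{T : e ∈ T} y^{T∖{e}}` over spanning trees `T` of `G`. -/
noncomputable def Tin_e [Fintype V] [DecidableEq V] (G : SimpleGraph V)
    (e : Sym2 V) (y : Sym2 V → ℝ) : ℝ :=
  ∑ T ∈ univ.filter (fun T => IsSpanningTree G T ∧ e ∈ T), edgeWeight y (T.erase e)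

/-! ### Cutting and exchanging edges of spanning trees -/

/-- `x` and `z` are joined by a path of edges in `F`. -/
def EdgeJoined (F : Finset (Sym2 V)) (x z : V) : Prop :=
  (SimpleGraph.fromEdgeSet (F : Set (Sym2 V))).Reachable x z

namespace EdgeJoined

variable {F F' : Finset (Sym2 V)} {x z t : V}

theorem rfl' : EdgeJoined F x x := SimpleGraph.Reachable.refl _

theorem symm (h : EdgeJoined F x z) : EdgeJoined F z x := SimpleGraph.Reachable.symm h

theorem trans (h : EdgeJoined F x z) (h' : EdgeJoined F z t) : EdgeJoined F x t :=
  SimpleGraph.Reachable.trans h h'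

theorem mono (hF : F ⊆ F') (h : EdgeJoined F x z) : EdgeJoined F' x z :=
  SimpleGraph.Reachable.mono (SimpleGraph.fromEdgeSet_mono (by exact_mod_cast hF)) h

theorem of_mem (h : s(x, z) ∈ F) : EdgeJoined F x z := by
  by_cases hxz : x = z
  · subst hxz; exact rfl'
  · exact SimpleGraph.Adj.reachable (by simp [h, hxz])

end EdgeJoined

namespace IsSpanningTree

variable {G : SimpleGraph V} {T : Finset (Sym2 V)} {a b v w : V}

theorem joined (hT : IsSpanningTree G T) (x z : V) : EdgeJoined T x z := hT.2.1 x z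

theorem ne (hT : IsSpanningTree G T) (h : s(a, b) ∈ T) : a ≠ b :=
  SimpleGraph.Adj.ne (G := G) (hT.1 h)

variable [DecidableEq V]

/-- Every edge of a spanning tree is a bridge of it. -/
theorem not_joined_erase (hT : IsSpanningTree G T) (h : s(a, b) ∈ T) :
    ¬ EdgeJoined (T.erase s(a, b)) a b := by
  have h1 := SimpleGraph.isAcyclic_iff_forall_adj_isBridge.1 hT.2.2 (v := a) (w := b)
    (by simp [h, hT.ne h])
  rw [SimpleGraph.isBridge_iff] at h1
  intro h2
  apply h1
  refine SimpleGraph.Reachable.mono ?_ h2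
  intro x z
  simp

/-- Removing the edge `ab` from a spanning tree leaves the components of `a` and of `b` only. -/
theorem joined_or_joined (hT : IsSpanningTree G T) (a b x : V) :
    EdgeJoined (T.erase s(a, b)) a x ∨ EdgeJoined (T.erase s(a, b)) b x := by
  have h := hT.joined a x
  unfold EdgeJoined at h
  rw [SimpleGraph.reachable_iff_reflTransGen] at h
  induction h with
  | refl => exact Or.inl .rfl'
  | @tail x z _ hxz ih =>
    rw [SimpleGraph.fromEdgeSet_adj] at hxz
    by_cases he : s(x, z) = s(a, b)
    · rcases Sym2.eq_iff.1 he with ⟨_, rfl⟩ | ⟨_, rfl⟩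
      · exact Or.inr .rfl'
      · exact Or.inl .rfl'
    · have : EdgeJoined (T.erase s(a, b)) x z :=
        .of_mem (Finset.mem_erase.2 ⟨he, by exact_mod_cast hxz.1⟩)
      exact ih.imp (·.trans this) (·.trans this)

theorem joined_right_iff (hT : IsSpanningTree G T) (h : s(a, b) ∈ T) (x : V) :
    EdgeJoined (T.erase s(a, b)) x b ↔ ¬ EdgeJoined (T.erase s(a, b)) x a := by
  constructor
  · intro h1 h2
    exact hT.not_joined_erase h (h2.symm.trans h1)
  · intro h1
    exact ((hT.joined_or_joined a b x).resolve_left fun h2 => h1 h2.symm).symm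

/-- Edge exchange: the edge `ab` of a spanning tree may be replaced by any edge of `G` that
joins the two components left by its removal. -/
theorem exchange (hT : IsSpanningTree G T) (h : s(a, b) ∈ T) (hvw : s(v, w) ∈ G.edgeSet)
    (hv : EdgeJoined (T.erase s(a, b)) a v) (hw : EdgeJoined (T.erase s(a, b)) b w) :
    IsSpanningTree G (insert s(v, w) (T.erase s(a, b))) := by
  have hsub : T.erase s(a, b) ⊆ insert s(v, w) (T.erase s(a, b)) := Finset.subset_insert _ _
  refine ⟨?_, ?_, ?_⟩
  · intro c hc
    rcases Finset.mem_insert.1 (Finset.mem_coe.1 hc) with rfl | hc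
    · exact hvw
    · exact hT.1 (Finset.mem_of_mem_erase hc)
  · have key : ∀ x, EdgeJoined (insert s(v, w) (T.erase s(a, b))) v x := by
      intro x
      rcases hT.joined_or_joined a b x with hx | hx
      · exact (hv.symm.trans hx).mono hsub
      · exact (EdgeJoined.of_mem (Finset.mem_insert_self _ _)).trans ((hw.symm.trans hx).mono hsub)
    exact { preconnected := fun x z => (key x).symm.trans (key z), nonempty := ⟨v⟩ }
  · have h1 : ¬ EdgeJoined (T.erase s(a, b)) v w := fun h2 =>
      hT.not_joined_erase h ((hv.trans h2).trans hw.symm)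
    have h2 : (SimpleGraph.fromEdgeSet (T.erase s(a, b) : Set (Sym2 V))).IsAcyclic :=
      hT.2.2.anti (SimpleGraph.fromEdgeSet_mono (by exact_mod_cast Finset.erase_subset _ _))
    have h3 := h2.sup_edge_of_not_reachable (u := v) (v := w) (by exact_mod_cast h1)
    convert h3 using 1
    rw [SimpleGraph.edge, ← SimpleGraph.fromEdgeSet_union, Set.union_singleton,
      Finset.coe_insert]

open Classical in
/-- The increments of `g` along the oriented edges of a spanning tree whose removal separates
`a` (on the tail side) from `b` (on the head side) add up to `g a - g b`. -/
theorem sum_cut [Fintype V] (hT : IsSpanningTree G T) (a b : V) (g : V → ℝ) :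
    ∑ p : V × V, (if s(p.1, p.2) ∈ T ∧ EdgeJoined (T.erase s(p.1, p.2)) a p.1 ∧
      EdgeJoined (T.erase s(p.1, p.2)) b p.2 then g p.1 - g p.2 else 0) = g a - g b := by
  -- The sum is half of `Φ a - Φ b`, and `Φ x - 2 g x` is constant along the edges of the tree.
  set Φ : V → ℝ := fun x => ∑ p : V × V, (if s(p.1, p.2) ∈ T ∧
    EdgeJoined (T.erase s(p.1, p.2)) x p.1 then g p.1 - g p.2 else 0) with hΦ
  have h1 : ∀ x z, s(x, z) ∈ T → Φ x - 2 * g x = Φ z - 2 * g z := by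
    intro x z hxz
    have hne := hT.ne hxz
    have : Φ x - Φ z = ∑ p : V × V, ((if p = (x, z) then g x - g z else 0) +
        (if p = (z, x) then g x - g z else 0)) := by
      rw [hΦ, ← Finset.sum_sub_distrib]
      refine Finset.sum_congr rfl ?_
      rintro ⟨v, w⟩ -
      by_cases hvw : s(v, w) ∈ T
      · by_cases he : s(x, z) = s(v, w)
        · have hn := hT.not_joined_erase hvw
          rcases Sym2.eq_iff.1 he with ⟨rfl, rfl⟩ | ⟨rfl, rfl⟩
          · have hn' : ¬ EdgeJoined (T.erase s(x, z)) z x := fun h => hn h.symm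
            simp [hvw, hn', EdgeJoined.rfl', hne]
          · have hn' : ¬ EdgeJoined (T.erase s(z, x)) x z := fun h => hn h.symm
            simp [hvw, hn', EdgeJoined.rfl', hne.symm]
        · have hj : EdgeJoined (T.erase s(v, w)) x z := .of_mem (Finset.mem_erase.2 ⟨he, hxz⟩)
          have hiff : EdgeJoined (T.erase s(v, w)) x v ↔ EdgeJoined (T.erase s(v, w)) z v :=
            ⟨hj.symm.trans, hj.trans⟩
          have n1 : ¬ (v = x ∧ w = z) := by rintro ⟨rfl, rfl⟩; exact he rfl
          have n2 : ¬ (v = z ∧ w = x) := by rintro ⟨rfl, rfl⟩; exact he Sym2.eq_swap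
          simp [hiff, n1, n2]
      · have n1 : ¬ (v = x ∧ w = z) := by rintro ⟨rfl, rfl⟩; exact hvw hxz
        have n2 : ¬ (v = z ∧ w = x) := by
          rintro ⟨rfl, rfl⟩; exact hvw (Sym2.eq_swap ▸ hxz)
        simp [hvw, n1, n2]
    rw [Finset.sum_add_distrib, Finset.sum_ite_eq' , Finset.sum_ite_eq'] at this
    simp only [Finset.mem_univ, if_true] at this
    linarith
  have h2 : Φ a - 2 * g a = Φ b - 2 * g b := by
    have h := hT.joined a b
    unfold EdgeJoined at h
    rw [SimpleGraph.reachable_iff_reflTransGen] at h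
    induction h with
    | refl => rfl
    | tail _ hxz ih =>
      rw [SimpleGraph.fromEdgeSet_adj] at hxz
      exact ih.trans (h1 _ _ (by exact_mod_cast hxz.1))
  set f : V × V → ℝ := fun p => if s(p.1, p.2) ∈ T ∧ EdgeJoined (T.erase s(p.1, p.2)) a p.1 ∧
      EdgeJoined (T.erase s(p.1, p.2)) b p.2 then g p.1 - g p.2 else 0 with hf
  have h3 : ∑ p, f p = ∑ p : V × V, f p.swap :=
    ((Equiv.prodComm V V).sum_comp f).symm
  have h4 : ∑ p, f p + ∑ p : V × V, f p.swap = Φ a - Φ b := by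
    rw [hΦ, ← Finset.sum_add_distrib, ← Finset.sum_sub_distrib]
    refine Finset.sum_congr rfl ?_
    rintro ⟨v, w⟩ -
    simp only [hf, Prod.fst_swap, Prod.snd_swap, Sym2.eq_swap (a := w) (b := v)]
    by_cases hvw : s(v, w) ∈ T
    · simp only [hvw, true_and, hT.joined_right_iff hvw]
      by_cases ha : EdgeJoined (T.erase s(v, w)) a v <;> by_cases hb : EdgeJoined (T.erase s(v, w)) b v <;>
        simp [ha, hb]
    · simp [hvw]
  linarith

end IsSpanningTree

/-! ### The equilibrium potential -/

section Potential

variable [Fintype V] [DecidableEq V]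

open Classical in
/-- The unnormalised equilibrium potential at `v`: the total weight of the forests `T ∖ {e}`,
over spanning trees `T ∋ e`, in which `v` lies in the component of `a`. -/
noncomputable def potential (G : SimpleGraph V) (e : Sym2 V) (a : V) (y : Sym2 V → ℝ)
    (v : V) : ℝ :=
  ∑ T ∈ univ.filter (fun T => IsSpanningTree G T ∧ e ∈ T),
    edgeWeight y (T.erase e) * (if EdgeJoined (T.erase e) a v then 1 else 0)

open Classical in
/-- The conductance between the ends of an ordered pair of vertices in `G ∖ {e}`; it is `0` when
they are not adjacent there. -/
noncomputable def conductance (G : SimpleGraph V) (e : Sym2 V) (y : Sym2 V → ℝ) (p : V × V) : ℝ :=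
  if s(p.1, p.2) ∈ G.edgeSet ∧ s(p.1, p.2) ≠ e then y s(p.1, p.2) else 0

variable (G : SimpleGraph V) (y : Sym2 V → ℝ)

theorem potential_left (e : Sym2 V) (a : V) : potential G e a y a = Tin_e G e y := by
  unfold potential Tin_e
  simp [EdgeJoined.rfl']

theorem potential_right (a b : V) : potential G s(a, b) a y b = 0 := by
  classical
  refine Finset.sum_eq_zero fun T hT => ?_
  rw [Finset.mem_filter] at hT
  simp [hT.2.1.not_joined_erase hT.2.2]

open Classical in
/-- Exchanging the edge `ab` for an edge `vw` whose ends lie in the components of `a` and of `b`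
is a weight-preserving bijection onto the spanning trees that avoid `ab` and have `vw` on their
path from `a` to `b`, in this direction. -/
theorem sum_exchange (a b : V) (hab : s(a, b) ∈ G.edgeSet) (p : V × V) :
    conductance G s(a, b) y p * ∑ T ∈ univ.filter (fun T => IsSpanningTree G T ∧ s(a, b) ∈ T),
        edgeWeight y (T.erase s(a, b)) *
          (if EdgeJoined (T.erase s(a, b)) a p.1 ∧ ¬ EdgeJoined (T.erase s(a, b)) a p.2 then 1 else 0) =
      ∑ T ∈ univ.filter (fun T => IsSpanningTree G T ∧ s(a, b) ∉ T), edgeWeight y T *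
        (if s(p.1, p.2) ∈ T ∧ EdgeJoined (T.erase s(p.1, p.2)) a p.1 ∧
          EdgeJoined (T.erase s(p.1, p.2)) b p.2 then 1 else 0) := by
  obtain ⟨v, w⟩ := p
  simp only [conductance]
  by_cases hc : s(v, w) ∈ G.edgeSet ∧ s(v, w) ≠ s(a, b)
  · rw [if_pos hc, Finset.mul_sum]
    simp only [mul_ite, mul_one, mul_zero]
    rw [← Finset.sum_filter, ← Finset.sum_filter, Finset.filter_filter, Finset.filter_filter]
    refine Finset.sum_nbij' (fun T => insert s(v, w) (T.erase s(a, b)))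
      (fun T => insert s(a, b) (T.erase s(v, w))) ?_ ?_ ?_ ?_ ?_
    · intro T hT
      simp only [Finset.mem_filter, Finset.mem_univ, true_and] at hT ⊢
      obtain ⟨⟨hT, he⟩, hv, hw⟩ := hT
      have hw' := (hT.joined_or_joined a b w).resolve_left hw
      have hn : s(v, w) ∉ T.erase s(a, b) := fun h => hw (hv.trans (.of_mem h))
      refine ⟨⟨hT.exchange he hc.1 hv hw', ?_⟩, Finset.mem_insert_self _ _, ?_⟩
      · simp [hc.2.symm]
      · rw [Finset.erase_insert hn]
        exact ⟨hv, hw'⟩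
    · intro T hT
      simp only [Finset.mem_filter, Finset.mem_univ, true_and] at hT ⊢
      obtain ⟨⟨hT, he⟩, hvw, hv, hw⟩ := hT
      have hn : s(a, b) ∉ T.erase s(v, w) := fun h => he (Finset.mem_of_mem_erase h)
      refine ⟨⟨hT.exchange hvw hab hv.symm hw.symm, Finset.mem_insert_self _ _⟩, ?_⟩
      rw [Finset.erase_insert hn]
      exact ⟨hv, fun h => hT.not_joined_erase hvw (hv.symm.trans h)⟩
    · intro T hT
      simp only [Finset.mem_filter, Finset.mem_univ, true_and] at hT
      obtain ⟨⟨hT, he⟩, hv, hw⟩ := hT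
      have hn : s(v, w) ∉ T.erase s(a, b) := fun h => hw (hv.trans (.of_mem h))
      simp only [Finset.erase_insert hn, Finset.insert_erase he]
    · intro T hT
      simp only [Finset.mem_filter, Finset.mem_univ, true_and] at hT
      obtain ⟨⟨hT, he⟩, hvw, hv, hw⟩ := hT
      have hn : s(a, b) ∉ T.erase s(v, w) := fun h => he (Finset.mem_of_mem_erase h)
      simp only [Finset.erase_insert hn, Finset.insert_erase hvw]
    · intro T hT
      simp only [Finset.mem_filter, Finset.mem_univ, true_and] at hT
      obtain ⟨⟨hT, he⟩, hv, hw⟩ := hT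
      have hn : s(v, w) ∉ T.erase s(a, b) := fun h => hw (hv.trans (.of_mem h))
      simp only [edgeWeight, Finset.prod_insert hn]
  · rw [if_neg hc, zero_mul]
    refine (Finset.sum_eq_zero fun T hT => ?_).symm
    rw [Finset.mem_filter] at hT
    have : s(v, w) ∉ T := fun h => hc ⟨hT.2.1.1 h, fun h' => hT.2.2 (h' ▸ h)⟩
    simp [this]

/-- The potential is harmonic away from `a` and `b`, and the current it drives from `a` to `b` is
`T^e`; this is the weak form of that statement, with test function `g`. The factor `2` comes from
summing over ordered pairs. -/
theorem sum_conductance_mul_potential (a b : V) (hab : s(a, b) ∈ G.edgeSet) (g : V → ℝ) :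
    ∑ p : V × V, conductance G s(a, b) y p *
        ((potential G s(a, b) a y p.1 - potential G s(a, b) a y p.2) * (g p.1 - g p.2)) =
      2 * (Tout_e G s(a, b) y * (g a - g b)) := by
  classical
  set J : V × V → ℝ := fun p =>
    ∑ T ∈ univ.filter (fun T => IsSpanningTree G T ∧ s(a, b) ∈ T),
        edgeWeight y (T.erase s(a, b)) *
          (if EdgeJoined (T.erase s(a, b)) a p.1 ∧ ¬ EdgeJoined (T.erase s(a, b)) a p.2 then 1 else 0)
    with hJ
  have h1 : ∀ p : V × V, potential G s(a, b) a y p.1 - potential G s(a, b) a y p.2 =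
      J p - J p.swap := by
    intro p
    simp only [hJ, potential]
    rw [← Finset.sum_sub_distrib, ← Finset.sum_sub_distrib]
    refine Finset.sum_congr rfl fun T _ => ?_
    by_cases h : EdgeJoined (T.erase s(a, b)) a p.1 <;>
      by_cases h' : EdgeJoined (T.erase s(a, b)) a p.2 <;> simp [h, h']
  have h2 : ∑ p : V × V, conductance G s(a, b) y p * (J p * (g p.1 - g p.2)) =
      Tout_e G s(a, b) y * (g a - g b) := by
    have : ∀ p : V × V, conductance G s(a, b) y p * (J p * (g p.1 - g p.2)) =
        ∑ T ∈ univ.filter (fun T => IsSpanningTree G T ∧ s(a, b) ∉ T), edgeWeight y T *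
        (if s(p.1, p.2) ∈ T ∧ EdgeJoined (T.erase s(p.1, p.2)) a p.1 ∧
          EdgeJoined (T.erase s(p.1, p.2)) b p.2 then g p.1 - g p.2 else 0) := by
      intro p
      rw [← mul_assoc, hJ, sum_exchange G y a b hab p, Finset.sum_mul]
      refine Finset.sum_congr rfl fun T _ => ?_
      split_ifs <;> ring
    rw [Finset.sum_congr rfl fun p _ => this p, Finset.sum_comm, Tout_e, Finset.sum_mul]
    refine Finset.sum_congr (by congr) fun T hT => ?_
    rw [Finset.mem_filter] at hT
    rw [← Finset.mul_sum, hT.2.1.sum_cut]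
  have h3 : ∑ p : V × V, conductance G s(a, b) y p * (J p.swap * (g p.1 - g p.2)) =
      -(Tout_e G s(a, b) y * (g a - g b)) := by
    rw [← h2, ← Finset.sum_neg_distrib, ← (Equiv.prodComm V V).sum_comp]
    refine Finset.sum_congr rfl fun p _ => ?_
    simp only [conductance, Equiv.prodComm_apply, Prod.fst_swap, Prod.snd_swap, Prod.swap_swap,
      Sym2.eq_swap (a := p.2) (b := p.1)]
    ring
  calc _ = ∑ p : V × V, (conductance G s(a, b) y p * (J p * (g p.1 - g p.2)) -
        conductance G s(a, b) y p * (J p.swap * (g p.1 - g p.2))) :=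
        Finset.sum_congr rfl fun p _ => by rw [h1]; ring
    _ = _ := by rw [Finset.sum_sub_distrib, h2, h3]; ring

end Potential

/-! ### Comparison of energies -/

/-- **Rayleigh monotonicity**.  Increasing the conductance of the edge `f` does not
decrease the effective conductance `T^e(G;y)/T_e(G;y)` measured across the edge `e`. -/
theorem rayleigh_monotone [Fintype V] [DecidableEq V]
    (G : SimpleGraph V) (hG : G.Connected) (hV : 2 ≤ Fintype.card V)
    (e f : Sym2 V) (heE : e ∈ G.edgeSet) (hfE : f ∈ G.edgeSet) (hef : e ≠ f)
    (y y' : Sym2 V → ℝ)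
    (hyy' : ∀ c ∈ G.edgeSet, c ≠ f → y c = y' c ∧ 0 < y c)
    (hyf : 0 < y f) (hyf' : y f ≤ y' f) :
    Tout_e G e y / Tin_e G e y ≤ Tout_e G e y' / Tin_e G e y' := by
  classical
  have hpos : ∀ c ∈ G.edgeSet, 0 < y c := fun c hc => by
    by_cases h : c = f
    · exact h ▸ hyf
    · exact (hyy' c hc h).2
  have hle : ∀ c ∈ G.edgeSet, y c ≤ y' c := fun c hc => by
    by_cases h : c = f
    · exact h ▸ hyf'
    · exact (hyy' c hc h).1.le
  -- If no spanning tree contained `e`, both denominators would be `0`, and so both quotients.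
  rcases (univ.filter (fun T => IsSpanningTree G T ∧ e ∈ T)).eq_empty_or_nonempty with h0 | h0
  · have : ∀ z, Tin_e G e z = 0 := fun z => by
      unfold Tin_e
      convert Finset.sum_empty
    simp [this]
  have hin : ∀ z : Sym2 V → ℝ, (∀ c ∈ G.edgeSet, 0 < z c) → 0 < Tin_e G e z := by
    intro z hz
    unfold Tin_e
    refine Finset.sum_pos (fun T hT => Finset.prod_pos fun c hc => ?_) (by convert h0)
    exact hz c ((Finset.mem_filter.1 hT).2.1.1 (Finset.mem_of_mem_erase hc))
  have hI := hin y hpos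
  have hI' := hin y' fun c hc => (hpos c hc).trans_le (hle c hc)
  clear hin h0
  induction e using Sym2.inductionOn with | _ a b => ?_
  set U := potential G s(a, b) a y with hU
  set U' := potential G s(a, b) a y' with hU'
  set I := Tin_e G s(a, b) y with hIdef
  set I' := Tin_e G s(a, b) y' with hIdef'
  have Ua : U a = I := potential_left G y _ a
  have Ub : U b = 0 := potential_right G y a b
  have Ua' : U' a = I' := potential_left G y' _ a
  have Ub' : U' b = 0 := potential_right G y' a b
  have e1 := sum_conductance_mul_potential G y a b heE U
  have e2 := sum_conductance_mul_potential G y a b heE U'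
  have e3 := sum_conductance_mul_potential G y' a b heE U'
  rw [← hU, Ua, Ub] at e1
  rw [← hU, Ua', Ub'] at e2
  rw [← hU', Ua', Ub'] at e3
  have hc0 : ∀ p, 0 ≤ conductance G s(a, b) y p := fun p => by
    unfold conductance
    split_ifs with h
    · exact (hpos _ h.1).le
    · exact le_rfl
  have hcle : ∀ p, conductance G s(a, b) y p ≤ conductance G s(a, b) y' p := fun p => by
    unfold conductance
    split_ifs with h
    · exact hle _ h.1
    · exact le_rfl
  have e4 : ∑ p : V × V, conductance G s(a, b) y p * ((U' p.1 - U' p.2) * (U' p.1 - U' p.2)) ≤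
      2 * (Tout_e G s(a, b) y' * (I' - 0)) := by
    rw [← e3]
    exact Finset.sum_le_sum fun p _ => mul_le_mul_of_nonneg_right (hcle p) (mul_self_nonneg _)
  -- The energy of `I' U - I U'`, whose boundary values agree at `a` and at `b`.
  have e5 : 0 ≤ ∑ p : V × V, conductance G s(a, b) y p *
      (I' * (U p.1 - U p.2) - I * (U' p.1 - U' p.2)) ^ 2 :=
    Finset.sum_nonneg fun p _ => mul_nonneg (hc0 p) (sq_nonneg _)
  have e6 : ∑ p : V × V, conductance G s(a, b) y p *
      (I' * (U p.1 - U p.2) - I * (U' p.1 - U' p.2)) ^ 2 =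
      I' ^ 2 * ∑ p : V × V, conductance G s(a, b) y p * ((U p.1 - U p.2) * (U p.1 - U p.2)) -
      2 * I' * I * ∑ p : V × V, conductance G s(a, b) y p * ((U p.1 - U p.2) * (U' p.1 - U' p.2)) +
      I ^ 2 * ∑ p : V × V, conductance G s(a, b) y p * ((U' p.1 - U' p.2) * (U' p.1 - U' p.2)) := by
    rw [Finset.mul_sum, Finset.mul_sum, Finset.mul_sum, ← Finset.sum_sub_distrib,
      ← Finset.sum_add_distrib]
    exact Finset.sum_congr rfl fun p _ => by ring
  rw [e6, e1, e2] at e5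
  rw [div_le_div_iff₀ hI hI']
  have e7 := mul_le_mul_of_nonneg_left e4 (sq_nonneg I)
  refine le_of_mul_le_mul_left ?_ (mul_pos hI hI')
  nlinarith [e5, e7]
end

section
/- Let G be a finite connected simple graph and let e, f be distinct edges of G, with fixed orientations. Then (number of spanning trees of G containing e but not f) · (number of spanning trees of G containing f but not e) − (number of spanning trees of G containing both e and f) · (number of spanning trees of G containing neither e nor f) = (|X⁺(G;e,f)| − |X⁻(G;e,f)|)². -/
/-!
Fix the root `u₁` and let `c g` be the signed incidence vector of the edge `g` with the root
coordinate deleted. Put `M = ∑ c_g c_gᵀ` over all edges `g ≠ e, f`, and `a = c_e`, `b = c_f`. The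
matrix-tree theorem (`det_frame_eq_numTrees`) identifies `det M`, `det (M + a aᵀ)`, `det (M + b bᵀ)` and
`det (M + a aᵀ + b bᵀ)` with the numbers of spanning trees avoiding both edges, avoiding `f`, avoiding
`e`, and of all spanning trees. In terms of these, the left-hand side of the theorem is
`(aᵀ (adj M) a) (bᵀ (adj M) b) - det M · D`, where `D` is the mixed second difference of the
determinants, and Jacobi's identity (`rankOne_identities`) makes it `(aᵀ (adj M) b)²`.

It remains to see that `aᵀ (adj M) b = |X⁻| - |X⁺|` (`polar_eq_numX`). By Cauchy–Binet
(`cauchyBinet_frame`) it equals `∑ det(F, a) det(F, b)` over edge sets `F` with `|V| - 2` elements. A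
term is nonzero exactly when `F ∪ {e}` and `F ∪ {f}` are both spanning trees; then `a - b` or `a + b`
lies in the span of the columns of `F`, according to whether `u₂` is joined in `F` to `w₂` or to `w₁`,
and the term is `1` or `-1` (`det_polar_eq`).

Only squares of minors, in the form `det (∑ g ∈ S, c_g c_gᵀ)`, appear below, so no ordering of the
edges is needed; the products `det(F, a) det(F, b)` are reached by polarization.
-/

open Finset

variable {V : Type*}

open Finset

open Classical in
/-- The number of spanning trees `T` of `G` satisfying the extra condition `P T`. -/
noncomputable def numTrees [Fintype V] [DecidableEq V] (G : SimpleGraph V)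
    (P : Finset (Sym2 V) → Prop) : ℕ :=
  (univ.filter (fun T => IsSpanningTree G T ∧ P T)).card

open Classical in
/-- The number of `F ∈ X(G;e,f)` for which `p` and `q` lie in the same component of
`(V, F)`.  With `p = u₂` (head of `e`) and `q = w₁` (tail of `f`) this is `|X⁺(G;e,f)|`;
with `q = w₂` (head of `f`) it is `|X⁻(G;e,f)|`. -/
noncomputable def numX [Fintype V] [DecidableEq V] (G : SimpleGraph V)
    (e f : Sym2 V) (p q : V) : ℕ :=
  (univ.filter (fun F => MemX G e f F ∧
      (SimpleGraph.fromEdgeSet (F : Set (Sym2 V))).Reachable p q)).card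

/-! ### Rank-one perturbations and the Cauchy–Binet formula -/

section
open Matrix Polynomial
variable {ι : Type*} [Fintype ι] [DecidableEq ι]

theorem det_add_rankOne {K : Type*} [Field K] {M : Matrix ι ι K} (h : M.det ≠ 0) (v : ι → K) :
    (M + vecMulVec v v).det = M.det * (1 + v ⬝ᵥ (M⁻¹ *ᵥ v)) := by
  rw [vecMulVec_eq Unit, det_add_replicateCol_mul_replicateRow (isUnit_iff_ne_zero.mpr h),
    det_unique (n := Unit)]
  simp [Matrix.mul_assoc, Matrix.mul_apply, dotProduct, mulVec]

theorem det_add_rankTwo {K : Type*} [Field K] {M : Matrix ι ι K} (h : M.det ≠ 0) (a b : ι → K) :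
    (M + vecMulVec a a + vecMulVec b b).det = M.det *
      ((1 + a ⬝ᵥ (M⁻¹ *ᵥ a)) * (1 + b ⬝ᵥ (M⁻¹ *ᵥ b)) - (a ⬝ᵥ (M⁻¹ *ᵥ b)) * (b ⬝ᵥ (M⁻¹ *ᵥ a))) := by
  have h1 : vecMulVec a a + vecMulVec b b = (Matrix.of ![a, b])ᵀ * Matrix.of ![a, b] := by
    ext i j
    simp [Matrix.mul_apply, vecMulVec_apply, Fin.sum_univ_two]
  have h2 : ∀ v w : ι → K, ∑ j, (∑ i, v i * M⁻¹ i j) * w j = v ⬝ᵥ (M⁻¹ *ᵥ w) := fun v w => by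
    rw [dotProduct_mulVec]; rfl
  rw [add_assoc, h1, det_add_mul _ _ (isUnit_iff_ne_zero.mpr h), Matrix.det_fin_two]
  simp only [Matrix.add_apply, Matrix.mul_apply, Matrix.one_apply, transpose_apply, of_apply,
    cons_val_zero, cons_val_one, h2]
  simp

/-- `rankOne_identities` for an invertible matrix over a field, where both identities follow from
the matrix determinant lemma. -/
theorem rankOne_identities_of_det_ne_zero {K : Type*} [Field K] {M : Matrix ι ι K} (hM : M.IsSymm)
    (h : M.det ≠ 0) (a b : ι → K) :
    4 * (((M + vecMulVec a a).det - M.det) * ((M + vecMulVec b b).det - M.det) -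
        ((M + vecMulVec a a + vecMulVec b b).det - (M + vecMulVec a a).det
          - (M + vecMulVec b b).det + M.det) * M.det)
      = ((M + vecMulVec (a + b) (a + b)).det - (M + vecMulVec a a).det
          - (M + vecMulVec b b).det + M.det) ^ 2 ∧
    (M + vecMulVec (a + b) (a + b)).det + (M + vecMulVec (a - b) (a - b)).det + 2 * M.det
      = 2 * (M + vecMulVec a a).det + 2 * (M + vecMulVec b b).det := by
  have hs : b ⬝ᵥ (M⁻¹ *ᵥ a) = a ⬝ᵥ (M⁻¹ *ᵥ b) := by
    rw [dotProduct_comm, dotProduct_mulVec, ← mulVec_transpose, transpose_nonsing_inv, hM.eq]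
  simp only [det_add_rankOne h, det_add_rankTwo h, mulVec_add, mulVec_sub, add_dotProduct,
    dotProduct_add, sub_dotProduct, dotProduct_sub, hs]
  constructor <;> ring

theorem map_det_add_rankOne {R S : Type*} [CommRing R] [CommRing S] (φ : R →+* S)
    (M : Matrix ι ι R) (v : ι → R) :
    (M.map φ + vecMulVec (φ ∘ v) (φ ∘ v)).det = φ (M + vecMulVec v v).det := by
  rw [RingHom.map_det]
  congr 1
  ext i j
  simp [vecMulVec_apply]

theorem map_det_add_rankTwo {R S : Type*} [CommRing R] [CommRing S] (φ : R →+* S)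
    (M : Matrix ι ι R) (v w : ι → R) :
    (M.map φ + vecMulVec (φ ∘ v) (φ ∘ v) + vecMulVec (φ ∘ w) (φ ∘ w)).det
      = φ (M + vecMulVec v v + vecMulVec w w).det := by
  rw [RingHom.map_det]
  congr 1
  ext i j
  simp [vecMulVec_apply]

omit [Fintype ι] [DecidableEq ι] in
theorem comp_add' {R S : Type*} [CommRing R] [CommRing S] (φ : R →+* S) (v w : ι → R) :
    φ ∘ v + φ ∘ w = φ ∘ (v + w) := by ext; simp

omit [Fintype ι] [DecidableEq ι] in
theorem comp_sub' {R S : Type*} [CommRing R] [CommRing S] (φ : R →+* S) (v w : ι → R) :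
    φ ∘ v - φ ∘ w = φ ∘ (v - w) := by ext; simp

/-- Rank-one perturbations of a symmetric integer matrix `M`. The first identity is Jacobi's
`2 × 2` minor identity for `adj M` written without the adjugate: in terms of the quadratic form
`q v = vᵀ (adj M) v = det (M + v vᵀ) - det M`, the right-hand side is the square of the polarization
`q (a + b) - q a - q b`. The second is the parallelogram law for `q`. -/
theorem rankOne_identities {M : Matrix ι ι ℤ} (hM : M.IsSymm) (a b : ι → ℤ) :
    4 * (((M + vecMulVec a a).det - M.det) * ((M + vecMulVec b b).det - M.det) -
        ((M + vecMulVec a a + vecMulVec b b).det - (M + vecMulVec a a).det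
          - (M + vecMulVec b b).det + M.det) * M.det)
      = ((M + vecMulVec (a + b) (a + b)).det - (M + vecMulVec a a).det
          - (M + vecMulVec b b).det + M.det) ^ 2 ∧
    (M + vecMulVec (a + b) (a + b)).det + (M + vecMulVec (a - b) (a - b)).det + 2 * M.det
      = 2 * (M + vecMulVec a a).det + 2 * (M + vecMulVec b b).det := by
  -- `N = X • 1 + M` is symmetric with monic determinant, hence invertible over the fraction field of
  -- `ℤ[X]`; the identities descend to `ℤ[X]` by injectivity, and `X = 0` recovers `M`.
  let φ : ℤ[X] →+* FractionRing ℤ[X] := algebraMap _ _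
  have hφ : Function.Injective φ := IsFractionRing.injective _ _
  let ev : ℤ[X] →+* ℤ := evalRingHom 0
  let N : Matrix ι ι ℤ[X] := charmatrix (-M)
  have hN : N.IsSymm := by
    unfold N
    rw [IsSymm, charmatrix, transpose_sub]
    congr 1
    · simp
    · ext i j
      simp [hM.apply i j]
  have hdet : N.det ≠ 0 := (charpoly_monic (-M)).ne_zero
  have hφdet : (N.map φ).det = φ N.det := (RingHom.map_det φ N).symm
  have hevN : N.map ev = M := by
    ext i j
    by_cases hij : i = j
    · subst hij; simp [N, ev]
    · simp [N, ev, charmatrix_apply_ne _ _ _ hij]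
  have hevdet : M.det = ev N.det := by rw [RingHom.map_det, ← hevN]; rfl
  have key := rankOne_identities_of_det_ne_zero (M := N.map φ) (hN.map φ)
    (by rw [hφdet]; exact (map_ne_zero_iff φ hφ).mpr hdet) (φ ∘ (C ∘ a)) (φ ∘ (C ∘ b))
  simp only [comp_add', comp_sub', map_det_add_rankOne, map_det_add_rankTwo, hφdet] at key
  have hev : ∀ v : ι → ℤ, v = ev ∘ (C ∘ v) := fun v => by ext i; simp [ev]
  have h1 : ∀ v : ι → ℤ, (M + vecMulVec v v).det = ev (N + vecMulVec (C ∘ v) (C ∘ v)).det :=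
    fun v => by rw [← map_det_add_rankOne, ← hev, hevN]
  have h2 : ∀ v w : ι → ℤ, (M + vecMulVec v v + vecMulVec w w).det
      = ev (N + vecMulVec (C ∘ v) (C ∘ v) + vecMulVec (C ∘ w) (C ∘ w)).det :=
    fun v w => by rw [← map_det_add_rankTwo, ← hev, ← hev, hevN]
  simp only [h1, h2, hevdet]
  rw [← map_ofNat φ 4, ← map_ofNat φ 2] at key
  simp only [← map_mul, ← map_sub, ← map_add, ← map_pow] at key
  have key1 := congrArg ev (hφ key.1)
  have key2 := congrArg ev (hφ key.2)
  simp only [map_mul, map_sub, map_add, map_pow, map_ofNat] at key1 key2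
  exact ⟨key1, key2⟩

/-- The frame matrix `∑ g ∈ K, c_g c_gᵀ` of the vectors `c g`, `g ∈ K`, that is `A Aᵀ` where `A` has
columns `c g`. -/
def frame {κ : Type*} (c : κ → ι → ℤ) (K : Finset κ) : Matrix ι ι ℤ :=
  ∑ g ∈ K, vecMulVec (c g) (c g)

/-- Row `i` of the frame matrix is `∑ g, c g i • c g`; this is multilinearity of `det` in the rows. -/
theorem det_frame_eq_sum_fun {κ : Type*} (c : κ → ι → ℤ) (K : Finset κ) :
    (frame c K).det = ∑ p ∈ Fintype.piFinset (fun _ : ι => K),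
      (Matrix.of fun i j => c (p i) i * c (p i) j).det := by
  have h : frame c K = fun i => ∑ g ∈ K, (fun j => c g i * c g j : ι → ℤ) := by
    ext i j
    simp [frame, Matrix.sum_apply, vecMulVec_apply]
  rw [h]
  exact (detRowAlternating (R := ℤ) (n := ι)).toMultilinearMap.map_sum_finset
    (fun i g => (fun j => c g i * c g j : ι → ℤ)) (fun _ => K)

theorem det_term_eq_zero {κ : Type*} (c : κ → ι → ℤ) (p : ι → κ) (hp : ¬ Function.Injective p) :
    (Matrix.of fun i j => c (p i) i * c (p i) j).det = 0 := by
  rw [Function.not_injective_iff] at hp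
  obtain ⟨i, i', h, hne⟩ := hp
  have := det_mul_column (fun i => c (p i) i) (Matrix.of fun i j => c (p i) j)
  simp only [Matrix.of_apply] at this
  rw [this, det_zero_of_row_eq hne (by ext j; simp [h]), mul_zero]

/-- The Cauchy–Binet formula for `A Aᵀ`. The squared maximal minor of `A` on the columns `S` is
written as `det (frame c S)`, so that the columns need not be ordered. -/
theorem cauchyBinet_frame {κ : Type*} [DecidableEq κ] (c : κ → ι → ℤ) (K : Finset κ) :
    (frame c K).det = ∑ S ∈ powersetCard (Fintype.card ι) K, (frame c S).det := by
  classical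
  let t : (ι → κ) → ℤ := fun p => (Matrix.of fun i j => c (p i) i * c (p i) j).det
  have hinj : ∀ L : Finset κ, (frame c L).det
      = ∑ p ∈ (Fintype.piFinset (fun _ : ι => L)).filter Function.Injective, t p := by
    intro L
    rw [det_frame_eq_sum_fun, sum_filter_of_ne]
    intro p _ h
    by_contra hp
    exact h (det_term_eq_zero c p hp)
  -- group the injective selections `p` by their image
  rw [hinj K, ← sum_fiberwise_of_maps_to (g := fun p : ι → κ => univ.image p)
    (t := powersetCard (Fintype.card ι) K)]
  · refine sum_congr rfl fun S hS => ?_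
    rw [mem_powersetCard] at hS
    rw [hinj S]
    refine sum_congr ?_ fun _ _ => rfl
    ext p
    simp only [mem_filter, Fintype.mem_piFinset]
    constructor
    · rintro ⟨⟨h1, h2⟩, rfl⟩
      exact ⟨fun i => mem_image_of_mem _ (mem_univ _), h2⟩
    · rintro ⟨h1, h2⟩
      refine ⟨⟨fun i => hS.1 (h1 i), h2⟩, eq_of_subset_of_card_le ?_ ?_⟩
      · intro x hx
        obtain ⟨i, -, rfl⟩ := mem_image.mp hx
        exact h1 i
      · rw [card_image_of_injective _ h2, hS.2, card_univ]
  · intro p hp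
    simp only [mem_filter, Fintype.mem_piFinset] at hp
    rw [mem_powersetCard, card_image_of_injective _ hp.2, card_univ]
    refine ⟨?_, rfl⟩
    intro x hx
    obtain ⟨i, -, rfl⟩ := mem_image.mp hx
    exact hp.1 i

omit [Fintype ι] [DecidableEq ι] in
theorem frame_isSymm {κ : Type*} (c : κ → ι → ℤ) (K : Finset κ) : (frame c K).IsSymm := by
  ext i j
  simp [frame, Matrix.sum_apply, vecMulVec_apply, mul_comm]

omit [Fintype ι] [DecidableEq ι] in
theorem frame_insert {κ : Type*} [DecidableEq κ] (c : κ → ι → ℤ) {K : Finset κ} {g : κ}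
    (h : g ∉ K) : frame c (insert g K) = frame c K + vecMulVec (c g) (c g) := by
  rw [frame, sum_insert h, add_comm]; rfl

omit [DecidableEq ι] in
theorem vecMul_frame {κ : Type*} (c : κ → ι → ℤ) (K : Finset κ) (y : ι → ℤ)
    (h : ∀ g ∈ K, y ⬝ᵥ c g = 0) : y ᵥ* frame c K = 0 := by
  rw [frame, Matrix.vecMul_sum]
  exact sum_eq_zero fun g hg => by rw [vecMul_vecMulVec, h g hg]; simp

theorem det_frame_eq_zero {κ : Type*} (c : κ → ι → ℤ) (K : Finset κ) (y : ι → ℤ) (hy : y ≠ 0)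
    (h : ∀ g ∈ K, y ⬝ᵥ c g = 0) : (frame c K).det = 0 :=
  exists_vecMul_eq_zero_iff.mp ⟨y, hy, vecMul_frame c K y h⟩

theorem det_frame_add_eq_zero {κ : Type*} (c : κ → ι → ℤ) (K : Finset κ) (v y : ι → ℤ) (hy : y ≠ 0)
    (h : ∀ g ∈ K, y ⬝ᵥ c g = 0) (hv : y ⬝ᵥ v = 0) : (frame c K + vecMulVec v v).det = 0 :=
  exists_vecMul_eq_zero_iff.mp ⟨y, hy, by
    rw [vecMul_add, vecMul_frame c K y h, vecMul_vecMulVec, hv]; simp⟩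

/-- If `|K|` equals the dimension and the vectors `c g` span `ℤ^ι`, then they form a square matrix
with an integer inverse, whose determinant is therefore `±1`. -/
theorem det_frame_eq_one {κ : Type*} (c : κ → ι → ℤ) (K : Finset κ) (hK : K.card = Fintype.card ι)
    (h : ∀ i, Pi.single i 1 ∈ Submodule.span ℤ (c '' K)) : (frame c K).det = 1 := by
  have h' : ∀ i, ∃ l : K → ℤ, ∑ g, l g • c g = Pi.single i 1 := by
    intro i
    have := h i
    rw [Set.image_eq_range, Submodule.mem_span_range_iff_exists_fun] at this
    exact this
  choose l hl using h'
  let σ : ι ≃ K := Fintype.equivOfCardEq (by simp [hK])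
  let A : Matrix ι ι ℤ := Matrix.of fun k j => c (σ k) j
  have hB : (Matrix.of fun i k => l i (σ k)) * A = 1 := by
    ext i j
    have := congrFun (hl i) j
    rw [← σ.sum_comp] at this
    simpa [Matrix.mul_apply, A, Matrix.one_apply, Pi.single_apply, eq_comm] using this
  have hG : frame c K = Aᵀ * A := by
    ext i j
    rw [frame, ← sum_coe_sort, ← σ.sum_comp]
    simp [Matrix.sum_apply, Matrix.mul_apply, vecMulVec_apply, A]
  have hu : IsUnit A.det := by
    have := congrArg det hB
    rw [det_mul, det_one] at this
    exact IsUnit.of_mul_eq_one_right _ this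
  rw [hG, det_mul, det_transpose]
  rcases Int.isUnit_iff.mp hu with h | h <;> rw [h] <;> rfl
end

/-! ### Incidence vectors and spanning trees -/

section
open Matrix
variable [Fintype V] [DecidableEq V]

/-- The basis vector of `x` in `ℤ^(V ∖ {r})`; it is `0` for `x = r`. -/
def delta (r x : V) : {v : V // v ≠ r} → ℤ := fun i => if i.1 = x then 1 else 0

/-- `c` lists the columns of a signed incidence matrix, reduced at the root `r`, for some choice of
orientations. -/
def IsIncidence (r : V) (c : Sym2 V → {v : V // v ≠ r} → ℤ) : Prop :=
  ∀ x y, c s(x, y) = delta r y - delta r x ∨ c s(x, y) = delta r x - delta r y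

/-- The restriction of a potential `z : V → ℤ` to `V ∖ {r}`. -/
def pot (r : V) (z : V → ℤ) : {v : V // v ≠ r} → ℤ := fun i => z i.1

theorem pot_dotProduct_delta {r : V} {z : V → ℤ} (hz : z r = 0) (x : V) :
    pot r z ⬝ᵥ delta r x = z x := by
  by_cases hx : x = r
  · subst hx
    rw [hz, dotProduct]
    exact sum_eq_zero fun i _ => by simp [delta, i.2]
  · rw [dotProduct, sum_eq_single (⟨x, hx⟩ : {v : V // v ≠ r})]
    · simp [pot, delta]
    · intro i _ hi
      have : i.1 ≠ x := fun h => hi (Subtype.ext h)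
      simp [delta, this]
    · simp

theorem pot_ne_zero {r : V} {z : V → ℤ} (hz : z r = 0) {x : V} (hx : z x ≠ 0) : pot r z ≠ 0 := by
  intro h
  apply hx
  rw [← pot_dotProduct_delta hz x, h, zero_dotProduct]

/-- A potential constant on the components of `(V, F)` and zero at the root is orthogonal to the
columns of `F`. -/
theorem pot_dotProduct_incidence {r : V} {c : Sym2 V → {v : V // v ≠ r} → ℤ} (hc : IsIncidence r c)
    {z : V → ℤ} (hz : z r = 0) {F : Finset (Sym2 V)} (h : ∀ x y, s(x, y) ∈ F → z x = z y) :
    ∀ g ∈ F, pot r z ⬝ᵥ c g = 0 := by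
  intro g
  induction g with | _ x y
  intro hg
  have := h x y hg
  rcases hc x y with h' | h' <;>
    simp [h', dotProduct_sub, pot_dotProduct_delta hz, this]

open Classical in
/-- The indicator of the component of `u` in `(V, F)`. -/
noncomputable def compIndicator (F : Finset (Sym2 V)) (u : V) : V → ℤ :=
  fun v => if (SimpleGraph.fromEdgeSet (F : Set (Sym2 V))).Reachable u v then 1 else 0

theorem compIndicator_eq {F : Finset (Sym2 V)} (u : V) {x y : V} (h : s(x, y) ∈ F) :
    compIndicator F u x = compIndicator F u y := by
  by_cases hxy : x = y
  · rw [hxy]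
  have hadj : (SimpleGraph.fromEdgeSet (F : Set (Sym2 V))).Adj x y := by
    simp [h, hxy]
  have : (SimpleGraph.fromEdgeSet (F : Set (Sym2 V))).Reachable u x ↔
      (SimpleGraph.fromEdgeSet (F : Set (Sym2 V))).Reachable u y :=
    ⟨fun h => h.trans hadj.reachable, fun h => h.trans hadj.reachable.symm⟩
  simp [compIndicator, this]

omit [DecidableEq V] in
theorem isSpanningTree_iff {G : SimpleGraph V} {T : Finset (Sym2 V)} :
    IsSpanningTree G T ↔ (T : Set (Sym2 V)) ⊆ G.edgeSet ∧
      (SimpleGraph.fromEdgeSet (T : Set (Sym2 V))).Connected ∧ T.card + 1 = Fintype.card V := by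
  unfold IsSpanningTree
  refine and_congr_right fun hT => ?_
  have hE : (SimpleGraph.fromEdgeSet (T : Set (Sym2 V))).edgeSet = T := by
    rw [SimpleGraph.edgeSet_fromEdgeSet]
    ext g
    simp only [Set.mem_sdiff]
    exact ⟨fun h => h.1, fun h => ⟨h, G.not_isDiag_of_mem_edgeSet (hT h)⟩⟩
  have := SimpleGraph.isTree_iff_connected_and_card
    (G := SimpleGraph.fromEdgeSet (T : Set (Sym2 V)))
  rw [SimpleGraph.isTree_iff, hE] at this
  simpa using this

theorem card_ne (r : V) : Fintype.card {v : V // v ≠ r} + 1 = Fintype.card V := by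
  have := Fintype.card_pos_iff.mpr ⟨r⟩
  have h := Fintype.card_subtype_compl (fun v => v = r)
  simp at h
  simp
  omega

open Classical in
/-- The squared maximal minors of the reduced incidence matrix are the indicators of spanning
trees. -/
theorem det_frame_eq_ite {r : V} {c : Sym2 V → {v : V // v ≠ r} → ℤ} (hc : IsIncidence r c)
    {G : SimpleGraph V} {S : Finset (Sym2 V)} (hS : (S : Set (Sym2 V)) ⊆ G.edgeSet)
    (hcard : S.card = Fintype.card {v : V // v ≠ r}) :
    (frame c S).det = if IsSpanningTree G S then 1 else 0 := by
  have hcard' : S.card + 1 = Fintype.card V := by rw [hcard, card_ne]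
  set H := SimpleGraph.fromEdgeSet (S : Set (Sym2 V)) with hH
  by_cases hconn : H.Connected
  · rw [if_pos (isSpanningTree_iff.mpr ⟨hS, hconn, hcard'⟩)]
    refine det_frame_eq_one c S hcard fun i => ?_
    -- moving along an edge of `S` changes the basis vector by `±` a column, and it is `0` at the root
    have key : ∀ x y, H.Walk x y → delta r x ∈ Submodule.span ℤ (c '' S) →
        delta r y ∈ Submodule.span ℤ (c '' S) := by
      intro x y p
      induction p with
      | nil => exact id
      | @cons x y _ hadj _ ih =>
        intro hx
        apply ih
        have hmem : c s(x, y) ∈ Submodule.span ℤ (c '' S) :=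
          Submodule.subset_span ⟨_, (SimpleGraph.fromEdgeSet_adj _).mp hadj |>.1, rfl⟩
        rcases hc x y with h | h <;> rw [h] at hmem
        · simpa using add_mem hmem hx
        · simpa using sub_mem hx hmem
    obtain ⟨p⟩ := hconn.preconnected r i.1
    have h0 : delta r r = 0 := by
      ext j
      simp [delta, j.2]
    have := key _ _ p (by rw [h0]; exact zero_mem _)
    convert this using 1
    ext j
    simp [delta, Pi.single_apply, Subtype.ext_iff]
  · rw [if_neg fun h => hconn h.2.1]
    have : ∃ x, ¬ H.Reachable r x := by
      by_contra! h
      have : Nonempty V := ⟨r⟩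
      exact hconn ⟨fun x y => (h x).symm.trans (h y)⟩
    obtain ⟨x, hx⟩ := this
    have hz : (fun v => compIndicator S r v - 1) r = 0 := by simp [compIndicator]
    refine det_frame_eq_zero c S (pot r fun v => compIndicator S r v - 1)
      (pot_ne_zero (x := x) hz ?_) (pot_dotProduct_incidence hc hz ?_)
    · simp only [compIndicator]
      rw [if_neg hx]; simp
    · intro x y hxy
      simp [compIndicator_eq r hxy]

/-- The matrix-tree theorem for the edge set `K`. -/
theorem det_frame_eq_numTrees {r : V} {c : Sym2 V → {v : V // v ≠ r} → ℤ} (hc : IsIncidence r c)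
    {G : SimpleGraph V} {K : Finset (Sym2 V)} (hK : (K : Set (Sym2 V)) ⊆ G.edgeSet) :
    (frame c K).det = numTrees G (fun T => T ⊆ K) := by
  classical
  rw [cauchyBinet_frame, numTrees, card_eq_sum_ones, Nat.cast_sum, sum_filter]
  rw [← sum_subset (subset_univ (powersetCard (Fintype.card {v : V // v ≠ r}) K))]
  · refine sum_congr rfl fun S hS => ?_
    rw [mem_powersetCard] at hS
    rw [det_frame_eq_ite hc ((coe_subset.mpr hS.1).trans hK) hS.2]
    simp [hS.1]
  · intro S _ hS
    rw [if_neg]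
    rintro ⟨h1, h2⟩
    have h3 := (isSpanningTree_iff.mp h1).2.2
    rw [← card_ne r] at h3
    exact hS (mem_powersetCard.mpr ⟨h2, by omega⟩)

omit [Fintype V] in
theorem not_reachable_of_insert {G : SimpleGraph V} {F : Finset (Sym2 V)} {x y : V}
    (h : s(x, y) ∉ F) (hT : IsSpanningTree G (insert s(x, y) F)) :
    ¬ (SimpleGraph.fromEdgeSet (F : Set (Sym2 V))).Reachable x y := by
  have hxy : x ≠ y := by
    have := hT.1 (mem_coe.mpr (mem_insert_self _ _))
    exact G.ne_of_adj this
  have hb := (SimpleGraph.isAcyclic_iff_forall_isBridge.mp hT.2.2) (e := s(x, y))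
    (by simp [hxy])
  rw [SimpleGraph.isBridge_iff] at hb
  refine fun hr => hb (hr.mono ?_)
  intro a b hab
  simp only [SimpleGraph.fromEdgeSet_adj, SimpleGraph.deleteEdges_adj, mem_coe, coe_insert,
    Set.mem_insert_iff, Set.mem_singleton_iff] at hab ⊢
  exact ⟨⟨Or.inr hab.1, hab.2⟩, fun h' => h (h' ▸ hab.1)⟩

open Classical in
/-- With `a`, `b` the columns of `e`, `f`, the left-hand side is `2 det(F, a) det(F, b)`. Its square
is `4 det(F, a)² det(F, b)²`, so it vanishes unless `F ∈ X(G;e,f)`. For `F ∈ X(G;e,f)` the indicator of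
the component of `u₂` annihilates the columns of `F` and also one of `a + b`, `a - b`, according to
which end of `f` lies in that component; this determines the sign. The root is `u₁`, where that
indicator vanishes. -/
theorem det_polar_eq {G : SimpleGraph V} {u₁ u₂ w₁ w₂ : V}
    {c : Sym2 V → {v : V // v ≠ u₁} → ℤ} (hc : IsIncidence u₁ c)
    (he : c s(u₁, u₂) = delta u₁ u₂ - delta u₁ u₁) (hf : c s(w₁, w₂) = delta u₁ w₂ - delta u₁ w₁)
    (heE : s(u₁, u₂) ∈ G.edgeSet) (hfE : s(w₁, w₂) ∈ G.edgeSet)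
    {F : Finset (Sym2 V)} (hF : (F : Set (Sym2 V)) ⊆ G.edgeSet) (heF : s(u₁, u₂) ∉ F)
    (hfF : s(w₁, w₂) ∉ F) (hcard : F.card + 1 = Fintype.card {v : V // v ≠ u₁}) :
    (frame c F + vecMulVec (c s(u₁, u₂) + c s(w₁, w₂)) (c s(u₁, u₂) + c s(w₁, w₂))).det
      - (frame c (insert s(u₁, u₂) F)).det - (frame c (insert s(w₁, w₂) F)).det
    = 2 * ((if MemX G s(u₁, u₂) s(w₁, w₂) F ∧
          (SimpleGraph.fromEdgeSet (F : Set (Sym2 V))).Reachable u₂ w₂ then 1 else 0)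
        - (if MemX G s(u₁, u₂) s(w₁, w₂) F ∧
          (SimpleGraph.fromEdgeSet (F : Set (Sym2 V))).Reachable u₂ w₁ then 1 else 0)) := by
  -- `F` has fewer columns than the dimension
  have h0 : (frame c F).det = 0 := by
    rw [cauchyBinet_frame, powersetCard_eq_empty.mpr (by omega), sum_empty]
  have ha := det_frame_eq_ite hc (S := insert s(u₁, u₂) F) (G := G)
    (by simp [Set.insert_subset_iff, heE, hF] ) (by rw [card_insert_of_notMem heF, hcard])
  have hb := det_frame_eq_ite hc (S := insert s(w₁, w₂) F) (G := G)
    (by simp [Set.insert_subset_iff, hfE, hF] ) (by rw [card_insert_of_notMem hfF, hcard])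
  obtain ⟨k1, k2⟩ := rankOne_identities (frame_isSymm c F) (c s(u₁, u₂)) (c s(w₁, w₂))
  rw [← frame_insert c heF, ← frame_insert c hfF, h0] at k1 k2
  by_cases hX : MemX G s(u₁, u₂) s(w₁, w₂) F
  · obtain ⟨-, -, hTe, hTf⟩ := id hX
    rw [if_pos hTe] at ha
    rw [if_pos hTf] at hb
    have nu := not_reachable_of_insert heF hTe
    have nw := not_reachable_of_insert hfF hTf
    have hz1 : compIndicator F u₂ u₁ = 0 := by
      rw [compIndicator, if_neg fun h => nu h.symm]
    have hz2 : compIndicator F u₂ u₂ = 1 := by simp [compIndicator]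
    have hy := pot_ne_zero hz1 (x := u₂) (by simp [hz2])
    have horth := pot_dotProduct_incidence hc hz1 (F := F) fun x y h => compIndicator_eq u₂ h
    have hye : pot u₁ (compIndicator F u₂) ⬝ᵥ c s(u₁, u₂) = 1 := by
      rw [he, dotProduct_sub, pot_dotProduct_delta hz1, pot_dotProduct_delta hz1, hz1, hz2]; rfl
    have hyf : pot u₁ (compIndicator F u₂) ⬝ᵥ c s(w₁, w₂)
        = compIndicator F u₂ w₂ - compIndicator F u₂ w₁ := by
      rw [hf, dotProduct_sub, pot_dotProduct_delta hz1, pot_dotProduct_delta hz1]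
    by_cases r1 : (SimpleGraph.fromEdgeSet (F : Set (Sym2 V))).Reachable u₂ w₁ <;>
      by_cases r2 : (SimpleGraph.fromEdgeSet (F : Set (Sym2 V))).Reachable u₂ w₂
    · exact absurd (r1.symm.trans r2) nw
    · have hz : pot u₁ (compIndicator F u₂) ⬝ᵥ (c s(u₁, u₂) + c s(w₁, w₂)) = 0 := by
        rw [dotProduct_add, hye, hyf]
        simp [compIndicator, r1, r2]
      rw [det_frame_add_eq_zero c F _ _ hy horth hz, ha, hb]
      simp [hX, r1, r2]
    · have hz : pot u₁ (compIndicator F u₂) ⬝ᵥ (c s(u₁, u₂) - c s(w₁, w₂)) = 0 := by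
        rw [dotProduct_sub, hye, hyf]
        simp [compIndicator, r1, r2]
      rw [det_frame_add_eq_zero c F _ _ hy horth hz, ha, hb] at k2
      rw [ha, hb]
      simp only [hX, r1, r2]
      simp
      linarith
    · have hz : pot u₁ (compIndicator F u₂) ⬝ᵥ c s(w₁, w₂) = 0 := by
        rw [hyf]
        simp [compIndicator, r1, r2]
      have := det_frame_add_eq_zero c F _ _ hy horth hz
      rw [← frame_insert c hfF, hb] at this
      exact absurd this one_ne_zero
  · have hab : (frame c (insert s(u₁, u₂) F)).det * (frame c (insert s(w₁, w₂) F)).det = 0 := by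
      rw [ha, hb]
      by_contra h
      apply hX
      simp only [mul_eq_zero, ite_eq_right_iff, one_ne_zero, imp_false, not_or, not_not] at h
      exact ⟨heF, hfF, h.1, h.2⟩
    simp only [hX, false_and, if_false]
    have : ((frame c F + vecMulVec (c s(u₁, u₂) + c s(w₁, w₂)) (c s(u₁, u₂) + c s(w₁, w₂))).det
      - (frame c (insert s(u₁, u₂) F)).det - (frame c (insert s(w₁, w₂) F)).det) ^ 2 = 0 := by
      linear_combination -k1 + 4 * hab
    simpa using pow_eq_zero_iff (two_ne_zero) |>.mp this

omit [Fintype V] in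
/-- Signed incidence columns exist with prescribed orientations of two distinct edges. -/
theorem exists_incidence {r u₁ u₂ w₁ w₂ : V} (hef : s(u₁, u₂) ≠ s(w₁, w₂)) :
    ∃ c : Sym2 V → {v : V // v ≠ r} → ℤ, IsIncidence r c ∧
      c s(u₁, u₂) = delta r u₂ - delta r u₁ ∧ c s(w₁, w₂) = delta r w₂ - delta r w₁ := by
  classical
  have hor : ∀ g : Sym2 V, ∃ p : V × V, g = s(p.1, p.2) ∧
      (g = s(u₁, u₂) → p = (u₁, u₂)) ∧ (g = s(w₁, w₂) → p = (w₁, w₂)) := by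
    intro g
    by_cases h1 : g = s(u₁, u₂)
    · exact ⟨(u₁, u₂), h1, fun _ => rfl, fun h => absurd (h1.symm.trans h) hef⟩
    by_cases h2 : g = s(w₁, w₂)
    · exact ⟨(w₁, w₂), h2, fun h => absurd h h1, fun _ => rfl⟩
    induction g with | _ x y
    exact ⟨(x, y), rfl, fun h => absurd h h1, fun h => absurd h h2⟩
  choose o ho1 ho2 ho3 using hor
  refine ⟨fun g => delta r (o g).2 - delta r (o g).1, fun x y => ?_, ?_, ?_⟩
  · rcases Sym2.eq_iff.mp (ho1 s(x, y)) with ⟨h1, h2⟩ | ⟨h1, h2⟩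
    · left; simp only [← h1, ← h2]
    · right; simp only [← h1, ← h2]
  · simp only [ho2 _ rfl]
  · simp only [ho3 _ rfl]
end

/-! ### The polarized sum and the counting of trees -/

section
open Matrix

/-- Cauchy–Binet for the columns of `K` together with one further column `v`, split according to
whether `v` is selected. The index `g ∉ K` serves only to label the new column. -/
theorem det_frame_add_eq_sum {ι κ : Type*} [Fintype ι] [DecidableEq ι] [DecidableEq κ]
    (c : κ → ι → ℤ) {K : Finset κ} {g : κ} (hg : g ∉ K) (v : ι → ℤ) {k : ℕ}
    (hk : k + 1 = Fintype.card ι) :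
    (frame c K + vecMulVec v v).det
      = (frame c K).det + ∑ F ∈ powersetCard k K, (frame c F + vecMulVec v v).det := by
  have hframe : ∀ L : Finset κ, g ∉ L → frame (Function.update c g v) L = frame c L := by
    intro L hL
    refine sum_congr rfl fun x hx => ?_
    rw [Function.update_of_ne (by rintro rfl; exact hL hx)]
  have hframe' : ∀ L : Finset κ, g ∉ L →
      frame (Function.update c g v) (insert g L) = frame c L + vecMulVec v v := by
    intro L hL
    rw [frame_insert _ hL, hframe L hL, Function.update_self]
  have hnot : ∀ {n : ℕ}, ∀ S ∈ powersetCard n K, g ∉ S :=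
    fun S hS h => hg ((mem_powersetCard.mp hS).1 h)
  rw [← hframe' K hg, cauchyBinet_frame, ← hk, powersetCard_succ_insert hg, sum_union,
    sum_image]
  · rw [cauchyBinet_frame c K, ← hk]
    exact congrArg₂ _ (sum_congr rfl fun S hS => by rw [hframe S (hnot S hS)])
      (sum_congr rfl fun S hS => by rw [hframe' S (hnot S hS)])
  · intro S hS T hT h
    rw [← erase_insert (hnot S hS), ← erase_insert (hnot T hT)]
    exact congrArg (fun U => U.erase g) h
  · rw [disjoint_left]
    intro S hS hS'
    obtain ⟨T, -, rfl⟩ := mem_image.mp hS'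
    exact hnot _ hS (mem_insert_self _ _)

/-- Twice the bilinear form of `adj M` at the columns of `e` and `f`, `M = frame c E₀`, is
`2 (|X⁻| - |X⁺|)`. -/
theorem polar_eq_numX [Fintype V] [DecidableEq V] {G : SimpleGraph V} {u₁ u₂ w₁ w₂ : V}
    {c : Sym2 V → {v : V // v ≠ u₁} → ℤ} (hc : IsIncidence u₁ c)
    (he : c s(u₁, u₂) = delta u₁ u₂ - delta u₁ u₁) (hf : c s(w₁, w₂) = delta u₁ w₂ - delta u₁ w₁)
    (heE : s(u₁, u₂) ∈ G.edgeSet) (hfE : s(w₁, w₂) ∈ G.edgeSet)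
    {E₀ : Finset (Sym2 V)}
    (hE₀ : ∀ g, g ∈ E₀ ↔ g ∈ G.edgeSet ∧ g ≠ s(u₁, u₂) ∧ g ≠ s(w₁, w₂)) :
    (frame c E₀ + vecMulVec (c s(u₁, u₂) + c s(w₁, w₂)) (c s(u₁, u₂) + c s(w₁, w₂))).det
      - (frame c E₀ + vecMulVec (c s(u₁, u₂)) (c s(u₁, u₂))).det
      - (frame c E₀ + vecMulVec (c s(w₁, w₂)) (c s(w₁, w₂))).det + (frame c E₀).det
    = 2 * ((numX G s(u₁, u₂) s(w₁, w₂) u₂ w₂ : ℤ) - numX G s(u₁, u₂) s(w₁, w₂) u₂ w₁) := by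
  classical
  have heE₀ : s(u₁, u₂) ∉ E₀ := fun h => ((hE₀ _).mp h).2.1 rfl
  have hfE₀ : s(w₁, w₂) ∉ E₀ := fun h => ((hE₀ _).mp h).2.2 rfl
  have hpos : 0 < Fintype.card {v : V // v ≠ u₁} :=
    Fintype.card_pos_iff.mpr ⟨⟨u₂, (G.ne_of_adj heE).symm⟩⟩
  obtain ⟨k, hk⟩ : ∃ k, k + 1 = Fintype.card {v : V // v ≠ u₁} :=
    ⟨_, Nat.sub_add_cancel hpos⟩
  have hnumX : ∀ q, (numX G s(u₁, u₂) s(w₁, w₂) u₂ q : ℤ) = ∑ F ∈ powersetCard k E₀,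
      if MemX G s(u₁, u₂) s(w₁, w₂) F ∧
        (SimpleGraph.fromEdgeSet (F : Set (Sym2 V))).Reachable u₂ q then 1 else 0 := by
    intro q
    rw [numX, card_eq_sum_ones, Nat.cast_sum, sum_filter]
    rw [← sum_subset (subset_univ (powersetCard k E₀))]
    · simp
    · intro F _ hF
      rw [if_neg]
      rintro ⟨⟨h1, h2, h3, -⟩, -⟩
      have h4 := (isSpanningTree_iff.mp h3).2.2
      rw [← card_ne u₁, card_insert_of_notMem h1] at h4
      refine hF (mem_powersetCard.mpr ⟨fun g hg => (hE₀ g).mpr ⟨?_, ?_, ?_⟩, by omega⟩)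
      · exact h3.1 (mem_coe.mpr (mem_insert_of_mem hg))
      · rintro rfl; exact h1 hg
      · rintro rfl; exact h2 hg
  have hsum : ∀ F ∈ powersetCard k E₀, _ := fun F hF => by
    rw [mem_powersetCard] at hF
    exact det_polar_eq hc he hf heE hfE (F := F) (fun g hg => ((hE₀ g).mp (hF.1 hg)).1)
      (fun h => heE₀ (hF.1 h)) (fun h => hfE₀ (hF.1 h)) (by omega)
  have hsum' := sum_congr (rfl : powersetCard k E₀ = _) hsum
  rw [sum_sub_distrib, sum_sub_distrib, ← mul_sum, sum_sub_distrib, ← hnumX, ← hnumX] at hsum'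
  rw [← hsum', det_frame_add_eq_sum c heE₀ _ hk, det_frame_add_eq_sum c heE₀ _ hk,
    det_frame_add_eq_sum c heE₀ _ hk]
  have h1 : ∑ F ∈ powersetCard k E₀, (frame c (insert s(u₁, u₂) F)).det
      = ∑ F ∈ powersetCard k E₀, (frame c F + vecMulVec (c s(u₁, u₂)) (c s(u₁, u₂))).det :=
    sum_congr rfl fun F hF => by
      rw [frame_insert c fun h => heE₀ ((mem_powersetCard.mp hF).1 h)]
  have h2 : ∑ F ∈ powersetCard k E₀, (frame c (insert s(w₁, w₂) F)).det
      = ∑ F ∈ powersetCard k E₀, (frame c F + vecMulVec (c s(w₁, w₂)) (c s(w₁, w₂))).det :=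
    sum_congr rfl fun F hF => by
      rw [frame_insert c fun h => hfE₀ ((mem_powersetCard.mp hF).1 h)]
  rw [h1, h2]
  ring

theorem numTrees_congr [Fintype V] [DecidableEq V] {G : SimpleGraph V}
    {P Q : Finset (Sym2 V) → Prop} (h : ∀ T, IsSpanningTree G T → (P T ↔ Q T)) :
    numTrees G P = numTrees G Q := by
  classical
  unfold numTrees
  congr 1
  ext T
  simp only [mem_filter, mem_univ, true_and]
  exact and_congr_right (h T)

theorem numTrees_split [Fintype V] [DecidableEq V] {G : SimpleGraph V}
    (P : Finset (Sym2 V) → Prop) (g : Sym2 V) :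
    numTrees G P = numTrees G (fun T => P T ∧ g ∈ T) + numTrees G (fun T => P T ∧ g ∉ T) := by
  classical
  unfold numTrees
  rw [← card_filter_add_card_filter_not (s := univ.filter fun T => IsSpanningTree G T ∧ P T)
    (fun T => g ∈ T), filter_filter, filter_filter]
  simp only [and_assoc]
end

/-- **Theorem 1, unweighted version** (Brooks–Smith–Stone–Tutte). -/
theorem rayleigh_identity_count [Fintype V] [DecidableEq V]
    (G : SimpleGraph V) (hG : G.Connected)
    (u₁ u₂ w₁ w₂ : V) (e f : Sym2 V)
    (he : e = s(u₁, u₂)) (hf : f = s(w₁, w₂))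
    (heE : e ∈ G.edgeSet) (hfE : f ∈ G.edgeSet) (hef : e ≠ f) :
    (numTrees G (fun T => e ∈ T ∧ f ∉ T) : ℤ) * numTrees G (fun T => f ∈ T ∧ e ∉ T)
      - (numTrees G (fun T => e ∈ T ∧ f ∈ T) : ℤ) * numTrees G (fun T => e ∉ T ∧ f ∉ T)
      = ((numX G e f u₂ w₁ : ℤ) - (numX G e f u₂ w₂ : ℤ)) ^ 2 := by
  classical
  subst he hf
  obtain ⟨c, hc, he, hf⟩ := exists_incidence (r := u₁) hef
  let E₀ : Finset (Sym2 V) := univ.filter fun g => g ∈ G.edgeSet ∧ g ≠ s(u₁, u₂) ∧ g ≠ s(w₁, w₂)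
  have hE₀ : ∀ g, g ∈ E₀ ↔ g ∈ G.edgeSet ∧ g ≠ s(u₁, u₂) ∧ g ≠ s(w₁, w₂) := by simp [E₀]
  have hpolar := polar_eq_numX hc he hf heE hfE hE₀
  have key := (rankOne_identities (frame_isSymm c E₀) (c s(u₁, u₂)) (c s(w₁, w₂))).1
  rw [hpolar] at key
  generalize s(u₁, u₂) = e at *
  generalize s(w₁, w₂) = f at *
  have heE₀ : e ∉ E₀ := fun h => ((hE₀ _).mp h).2.1 rfl
  have hfE₀ : f ∉ E₀ := fun h => ((hE₀ _).mp h).2.2 rfl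
  have hsub : (E₀ : Set (Sym2 V)) ⊆ G.edgeSet := fun g hg => ((hE₀ g).mp hg).1
  have hd0 := det_frame_eq_numTrees hc hsub
  have hda := det_frame_eq_numTrees hc (G := G) (K := insert e E₀)
    (by simp [Set.insert_subset_iff, heE, hsub])
  have hdb := det_frame_eq_numTrees hc (G := G) (K := insert f E₀)
    (by simp [Set.insert_subset_iff, hfE, hsub])
  have hdab := det_frame_eq_numTrees hc (G := G) (K := insert f (insert e E₀))
    (by simp [Set.insert_subset_iff, heE, hfE, hsub])
  rw [← frame_insert c heE₀, ← frame_insert c hfE₀,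
    ← frame_insert c (by simp [hfE₀, hef.symm]), hd0, hda, hdb, hdab] at key
  have n0 : numTrees G (fun T => T ⊆ E₀) = numTrees G (fun T => e ∉ T ∧ f ∉ T) :=
    numTrees_congr fun T hT => ⟨fun h => ⟨fun h' => heE₀ (h h'), fun h' => hfE₀ (h h')⟩,
      fun h g hg => (hE₀ g).mpr ⟨hT.1 hg, fun h' => h.1 (h' ▸ hg), fun h' => h.2 (h' ▸ hg)⟩⟩
  have hall : ∀ T, IsSpanningTree G T → T ⊆ insert f (insert e E₀) := fun T hT g hg => by
    have := hT.1 hg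
    simp only [mem_insert, hE₀]
    tauto
  have na : numTrees G (fun T => T ⊆ insert e E₀) = numTrees G (fun T => f ∉ T) :=
    numTrees_congr fun T hT => ⟨fun h h' => by simpa [hfE₀, hef.symm] using h h',
      fun h => (subset_insert_iff_of_notMem h).mp (hall T hT)⟩
  have nb : numTrees G (fun T => T ⊆ insert f E₀) = numTrees G (fun T => e ∉ T) :=
    numTrees_congr fun T hT => ⟨fun h h' => by simpa [heE₀, hef] using h h',
      fun h => (subset_insert_iff_of_notMem h).mp (by rw [insert_comm]; exact hall T hT)⟩
  have nab : numTrees G (fun T => T ⊆ insert f (insert e E₀)) = numTrees G (fun _ => True) :=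
    numTrees_congr fun T hT => ⟨fun _ => trivial, fun _ => hall T hT⟩
  have sa := numTrees_split (G := G) (fun T => f ∉ T) e
  have sb := numTrees_split (G := G) (fun T => e ∉ T) f
  have sab := numTrees_split (G := G) (fun _ => True) e
  have se := numTrees_split (G := G) (fun T => e ∈ T) f
  simp only [true_and] at sab
  simp only [and_comm (b := e ∈ _), and_comm (b := e ∉ _)] at sa
  have hcomm : numTrees G (fun T => e ∉ T ∧ f ∈ T) = numTrees G (fun T => f ∈ T ∧ e ∉ T) :=
    numTrees_congr fun T _ => and_comm
  rw [n0, na, nb, nab, sab, se, sa, sb, hcomm] at key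
  push_cast at key
  nlinarith [key]
end
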